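/- Let m ≥ 3 be an integer. If δ > 0 is sufficiently small, then for any map u ∈ Σ_m with E(u) ≤ 4πm + δ² there exist s > 0, α ∈ ℝ, and a function z : (0,∞) → ℂ such that u(r,θ) = e^{(mθ+α)R}[ (1 + γ(r/s)) h(r/s) + V^{r/s}(z(r/s)) ], where γ := (1 − |z|²)^{1/2} − 1, such that z satisfies the orthogonality condition ∫₀^∞ z(ρ) h₁(ρ) ρ dρ = 0, and ‖z‖_X² ≤ C (E(u) − 4πm) for a constant C depending only on m. -/

import Mathlib

open MeasureTheory Set Real Filter
open scoped ENNReal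

noncomputable section

abbrev V3 := Fin 3 → ℝ
abbrev V2 := Fin 2 → ℝ

/-- cross product in ℝ³ -/
def cross3 (a b : V3) : V3 :=
  ![a 1 * b 2 - a 2 * b 1, a 2 * b 0 - a 0 * b 2, a 0 * b 1 - a 1 * b 0]

/-- dot product in ℝ³ -/
def dot3 (a b : V3) : ℝ := a 0 * b 0 + a 1 * b 1 + a 2 * b 2

/-- squared euclidean norm in ℝ³ -/
def nsq3 (a : V3) : ℝ := a 0 ^ 2 + a 1 ^ 2 + a 2 ^ 2

/-- the generator R of rotations about the x₃-axis -/
def Rv (a : V3) : V3 := ![-a 1, a 0, 0]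

/-- the rotation e^{αR} about the x₃-axis -/
def rotZ (α : ℝ) (a : V3) : V3 :=
  ![Real.cos α * a 0 - Real.sin α * a 1, Real.sin α * a 0 + Real.cos α * a 1, a 2]

def kHat : V3 := ![0, 0, 1]
def negkHat : V3 := ![0, 0, -1]
def jHat : V3 := ![0, 1, 0]

/-- first component of the harmonic map profile -/
def h1f (m : ℕ) (r : ℝ) : ℝ := 2 / (r ^ (m : ℤ) + r ^ (-(m : ℤ)))

/-- third component of the harmonic map profile -/
def h3f (m : ℕ) (r : ℝ) : ℝ := (r ^ (m : ℤ) - r ^ (-(m : ℤ))) / (r ^ (m : ℤ) + r ^ (-(m : ℤ)))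

/-- the harmonic map profile h -/
def hProf (m : ℕ) (r : ℝ) : V3 := ![h1f m r, 0, h3f m r]

/-- the r-derivative of the harmonic map profile -/
def dhProf (m : ℕ) (r : ℝ) : V3 :=
  ![-((m : ℝ) / r) * h1f m r * h3f m r, 0, ((m : ℝ) / r) * (h1f m r) ^ 2]

/-- profile of the harmonic map e^{(mθ+α)R} h(r/s) -/
def harmP (m : ℕ) (s α : ℝ) (r : ℝ) : V3 := rotZ α (hProf m (r / s))

/-- its r-derivative -/
def dharmP (m : ℕ) (s α : ℝ) (r : ℝ) : V3 := fun i => (1 / s) * rotZ α (dhProf m (r / s)) i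

/-- `v` is locally absolutely continuous on (0,∞), with a.e. derivative `dv`. -/
def LocAC (v dv : ℝ → V3) : Prop :=
  (∀ a b : ℝ, 0 < a → a ≤ b → ∀ i, IntervalIntegrable (fun r => dv r i) volume a b) ∧
  (∀ a b : ℝ, 0 < a → a ≤ b → ∀ i, v b i - v a i = ∫ r in a..b, dv r i)

/-- energy density (w.r.t. dr) of the m-equivariant map with profile (v,dv) -/
def eDen (m : ℕ) (v dv : ℝ → V3) (r : ℝ) : ℝ :=
  (nsq3 (dv r) + ((m : ℝ) ^ 2 / r ^ 2) * ((v r 0) ^ 2 + (v r 1) ^ 2)) * r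

/-- the energy E(u) = (1/2)∫|∇u|² of the m-equivariant map with profile (v,dv) -/
def energy (m : ℕ) (v dv : ℝ → V3) : ℝ := π * ∫ r in Ioi (0:ℝ), eDen m v dv r

/-- membership in the class Σ_m, expressed in terms of the profile (v,dv) -/
def InSigma (m : ℕ) (v dv : ℝ → V3) : Prop :=
  LocAC v dv ∧ (∀ r ∈ Ioi (0:ℝ), nsq3 (v r) = 1) ∧
  IntegrableOn (eDen m v dv) (Ioi (0:ℝ)) ∧
  Tendsto v (nhdsWithin 0 (Ioi 0)) (nhds negkHat) ∧
  Tendsto v atTop (nhds kHat)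

/-- squared Ḣ¹(ℝ²) distance between the m-equivariant maps with profiles (v,dv), (w,dw) -/
def dH1sq (m : ℕ) (v dv w dw : ℝ → V3) : ℝ :=
  2 * π * ∫ r in Ioi (0:ℝ),
    (nsq3 (fun i => dv r i - dw r i)
      + ((m : ℝ) ^ 2 / r ^ 2) * ((v r 0 - w r 0) ^ 2 + (v r 1 - w r 1) ^ 2)) * r

/-- Ḣ¹(ℝ²) distance -/
def dH1 (m : ℕ) (v dv w dw : ℝ → V3) : ℝ := Real.sqrt (dH1sq m v dv w dw)

/-- the polar angle of a point of ℝ² -/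
def angleOf (x : V2) : ℝ := Complex.arg ⟨x 0, x 1⟩

/-- the radius of a point of ℝ² -/
def radOf (x : V2) : ℝ := Real.sqrt ((x 0) ^ 2 + (x 1) ^ 2)

/-- the m-equivariant map u(r,θ) = e^{mθR} v(r) -/
def eqMap (m : ℕ) (v : ℝ → V3) (x : V2) : V3 := rotZ ((m : ℝ) * angleOf x) (v (radOf x))

/-- the spatial gradient ∂_j u of the m-equivariant map with profile (v,dv) -/
def eqGrad (m : ℕ) (v dv : ℝ → V3) (x : V2) (j : Fin 2) : V3 :=
  rotZ ((m : ℝ) * angleOf x) (fun i =>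
    (x j / radOf x) * dv (radOf x) i
      + ((m : ℝ) * (if j = 0 then -(x 1) else x 0) / radOf x ^ 2) * Rv (v (radOf x)) i)

/-- weak (distributional) form of the Schrödinger map equation ∂ₜu = u × Δu on the time
interval I, for the m-equivariant map with time-dependent profile (v,dv):
∫∫ { u·φ_t - Σ_j (u × ∂_j u)·∂_j φ } dx dt = 0 for all C¹ compactly supported φ. -/
def WeakSM (m : ℕ) (I : Set ℝ) (v dv : ℝ → ℝ → V3) : Prop :=
  ∀ φ : ℝ → V2 → V3,
    (∀ i, ContDiff ℝ 1 (fun q : ℝ × V2 => φ q.1 q.2 i)) →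
    (∀ i, HasCompactSupport (fun q : ℝ × V2 => φ q.1 q.2 i)) →
    (∀ t, t ∉ interior I → ∀ x, φ t x = 0) →
    (∫ t in I, ∫ x : V2,
      (dot3 (eqMap m (v t) x) (fun i => deriv (fun τ => φ τ x i) t)
        - ∑ j : Fin 2, dot3 (cross3 (eqMap m (v t) x) (eqGrad m (v t) (dv t) x j))
            (fun i => fderiv ℝ (fun y => φ t y i) x (Pi.single j 1)))) = 0

/-- continuity in t of the map t ↦ u(t) with respect to the Ḣ¹ distance, on I -/
def H1Cont (m : ℕ) (I : Set ℝ) (v dv : ℝ → ℝ → V3) : Prop :=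
  ∀ t₀ ∈ I, ∀ ε > (0:ℝ), ∃ η > (0:ℝ), ∀ t ∈ I, |t - t₀| < η →
    dH1 m (v t) (dv t) (v t₀) (dv t₀) < ε

/-- a weak solution of the Schrödinger map equation in the class C(I; Σ_m), with
initial profile v₀ -/
def SolClass (m : ℕ) (I : Set ℝ) (v dv : ℝ → ℝ → V3) (v₀ : ℝ → V3) : Prop :=
  (∀ r ∈ Ioi (0:ℝ), v 0 r = v₀ r) ∧ WeakSM m I v dv ∧
  (∀ t ∈ I, InSigma m (v t) (dv t)) ∧ H1Cont m I v dv

/-- the profile of Δu for the m-equivariant map u with profile (v,dv,ddv):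
Δu = e^{mθR}( v_rr + v_r/r + (m²/r²) R² v ) -/
def lapP (m : ℕ) (v dv ddv : ℝ → V3) (r : ℝ) : V3 := fun i =>
  ddv r i + dv r i / r + ((m : ℝ) ^ 2 / r ^ 2) * (![-(v r 0), -(v r 1), 0] : V3) i

/-- squared Ḣ² distance (via the Laplacian) -/
def dH2sq (m : ℕ) (v dv ddv w dw ddw : ℝ → V3) : ℝ :=
  2 * π * ∫ r in Ioi (0:ℝ), nsq3 (fun i => lapP m v dv ddv r i - lapP m w dw ddw r i) * r


/-- `z` is locally absolutely continuous on (0,∞), with a.e. derivative `dz`. -/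
def LocACC (z dz : ℝ → ℂ) : Prop :=
  (∀ a b : ℝ, 0 < a → a ≤ b → IntervalIntegrable dz volume a b) ∧
  (∀ a b : ℝ, 0 < a → a ≤ b → z b - z a = ∫ ρ in a..b, dz ρ)

/-- the density (w.r.t. dρ) of the squared X-norm: (|z'|² + |z|²/ρ²) ρ -/
def xDen (z dz : ℝ → ℂ) (ρ : ℝ) : ℝ := (‖dz ρ‖ ^ 2 + ‖z ρ‖ ^ 2 / ρ ^ 2) * ρ

/-- the X-norm ‖z‖_X = (∫ (|z'|² + |z|²/ρ²) ρ dρ)^{1/2} -/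
def normX (z dz : ℝ → ℂ) : ℝ := Real.sqrt (∫ ρ in Ioi (0:ℝ), xDen z dz ρ)

/-- the operator L₀ = ∂_ρ + (m/ρ) h₃(ρ) -/
def L0op (m : ℕ) (z dz : ℝ → ℂ) (ρ : ℝ) : ℂ :=
  dz ρ + ((((m : ℝ) / ρ) * h3f m ρ : ℝ) : ℂ) * z ρ

/-- γ = (1 − |z|²)^{1/2} − 1 -/
def gamC (z : ℝ → ℂ) (ρ : ℝ) : ℝ := Real.sqrt (1 - ‖z ρ‖ ^ 2) - 1

/-- the tangent vector V^ρ(z) = z₁ ĵ + z₂ (h(ρ) × ĵ), h(ρ) × ĵ = (−h₃, 0, h₁) -/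
def Vrho (m : ℕ) (z : ℂ) (ρ : ℝ) : V3 :=
  fun i => z.re * jHat i + z.im * (![-(h3f m ρ), 0, h1f m ρ] : V3) i


/-!
The energy of a profile `v` is `4πm` plus `π` times the integral of `r |v' - (m/r) (k̂ - v₃ v)|²`,
so that a profile of nearly minimal energy is an approximate solution of the first order equation
solved by `h` and its dilations and rotations. After a dilation and a rotation the profile agrees
with `h` at `r = 1`. The equation, whose linearization at `h` contracts away from `r = 1`, then
keeps it uniformly close to `h`, with a squared `X`-distance controlled by the excess energy.

Two real equations remain for the orthogonality condition. The angle is chosen so that the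
`ĵ`-moment vanishes. The scale is found by the intermediate value theorem, since the moment of
`h(s ·)` against `h × ĵ` changes sign, with nonzero slope, at `s = 1`. Both parameters stay within
`O(√excess)` of `(1, 0)`, so the estimate survives the recentering.
-/

/-- `f` is locally absolutely continuous on `(0,∞)`, with a.e. derivative `f'`: the scalar
counterpart of `LocAC`. -/
def IsLocAC (f f' : ℝ → ℝ) : Prop :=
  ∀ a b : ℝ, 0 < a → a ≤ b → IntervalIntegrable f' volume a b ∧ f b - f a = ∫ r in a..b, f' r

theorem aecover_Ioi_zero_Ioo_one_div : AECover (volume.restrict (Ioi (0 : ℝ))) atTop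
    (fun n : ℕ => Ioo (1 / ((n : ℝ) + 1)) ((n : ℝ) + 1)) :=
  (aecover_Ioi_of_Ioi tendsto_one_div_add_atTop_nhds_zero_nat).inter
    (aecover_Iio (tendsto_atTop_add_const_right _ _ tendsto_natCast_atTop_atTop))

theorem one_div_natCast_add_one_le_one (n : ℕ) : 1 / ((n : ℝ) + 1) ≤ 1 := by
  simpa using Nat.one_div_le_one_div (α := ℝ) n.zero_le

theorem one_div_natCast_add_one_le (n : ℕ) : 1 / ((n : ℝ) + 1) ≤ n + 1 :=
  (one_div_natCast_add_one_le_one n).trans (by simp)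

theorem Ioc_subset_Ioi_zero {a : ℝ} (ha : 0 < a) (b : ℝ) : Ioc a b ⊆ Ioi 0 :=
  fun _ hx => ha.trans hx.1

theorem ae_restrict_Ioc_of_Ioi_zero {p : ℝ → Prop} {a : ℝ} (ha : 0 < a) (b : ℝ)
    (h : ∀ᵐ r ∂volume.restrict (Ioi (0 : ℝ)), p r) : ∀ᵐ r ∂volume.restrict (Ioc a b), p r :=
  ae_restrict_of_ae_restrict_of_subset (Ioc_subset_Ioi_zero ha b) h

theorem intervalIntegral_mono_of_ae_Ioi_zero {f g : ℝ → ℝ} {a b : ℝ} (ha : 0 < a) (hab : a ≤ b)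
    (hf : IntervalIntegrable f volume a b) (hg : IntervalIntegrable g volume a b)
    (h : ∀ᵐ r ∂volume.restrict (Ioi (0 : ℝ)), r ∈ Ioc a b → f r ≤ g r) :
    ∫ r in a..b, f r ≤ ∫ r in a..b, g r := by
  rw [intervalIntegral.integral_of_le hab, intervalIntegral.integral_of_le hab]
  refine setIntegral_mono_ae_restrict hf.1 hg.1 ?_
  filter_upwards [ae_restrict_Ioc_of_Ioi_zero ha b h, ae_restrict_mem measurableSet_Ioc]
    with r hr hmem using hr hmem

theorem intervalIntegrable_of_continuousOn_Ioi_zero {f : ℝ → ℝ} (hf : ContinuousOn f (Ioi 0))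
    {a b : ℝ} (ha : 0 < a) (hab : a ≤ b) : IntervalIntegrable f volume a b :=
  (hf.mono fun _ hx => ha.trans_le (uIcc_of_le hab ▸ hx).1).intervalIntegrable

theorem absolutelyContinuousOnInterval_congr {f g : ℝ → ℝ} {a b : ℝ}
    (hf : AbsolutelyContinuousOnInterval f a b) (hfg : EqOn f g (uIcc a b)) :
    AbsolutelyContinuousOnInterval g a b := by
  rw [absolutelyContinuousOnInterval_iff] at hf ⊢
  intro ε hε
  obtain ⟨δ, hδ, h⟩ := hf ε hε
  refine ⟨δ, hδ, fun E hE hlt => lt_of_eq_of_lt (Finset.sum_congr rfl fun i hi => ?_) (h E hE hlt)⟩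
  rw [hfg (hE.1 i hi).1, hfg (hE.1 i hi).2]

theorem integrableOn_Ioi_of_intervalIntegral_le {f : ℝ → ℝ} {M : ℝ}
    (hi : ∀ a b : ℝ, 0 < a → a ≤ b → IntervalIntegrable f volume a b)
    (h0 : ∀ᵐ x ∂volume.restrict (Ioi (0 : ℝ)), 0 ≤ f x)
    (hM : ∀ a b : ℝ, 0 < a → a ≤ 1 → 1 ≤ b → ∫ r in a..b, f r ≤ M) :
    IntegrableOn f (Ioi 0) ∧ ∫ r in Ioi (0 : ℝ), f r ≤ M := by
  have hpos (n : ℕ) : (0 : ℝ) < 1 / ((n : ℝ) + 1) := by positivity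
  have hrestrict (n : ℕ) :
      (volume.restrict (Ioi (0 : ℝ))).restrict (Ioo (1 / ((n : ℝ) + 1)) ((n : ℝ) + 1)) =
        volume.restrict (Ioo (1 / ((n : ℝ) + 1)) ((n : ℝ) + 1)) :=
    Measure.restrict_restrict_of_subset fun x hx => (hpos n).trans hx.1
  have hbound (n : ℕ) :
      ∫ r in Ioo (1 / ((n : ℝ) + 1)) ((n : ℝ) + 1), f r ∂volume.restrict (Ioi 0) ≤ M := by
    rw [hrestrict, ← integral_Ioc_eq_integral_Ioo,
      ← intervalIntegral.integral_of_le (one_div_natCast_add_one_le n)]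
    exact hM _ _ (hpos n) (one_div_natCast_add_one_le_one n) (by simp)
  have hint : IntegrableOn f (Ioi 0) := by
    refine aecover_Ioi_zero_Ioo_one_div.integrable_of_integral_bounded_of_nonneg_ae M
      (fun n => ?_) h0 (.of_forall hbound)
    rw [IntegrableOn, hrestrict]
    exact (hi _ _ (hpos n) (one_div_natCast_add_one_le n)).1.mono_set Ioo_subset_Ioc_self
  exact ⟨hint, le_of_tendsto
    (aecover_Ioi_zero_Ioo_one_div.integral_tendsto_of_countably_generated hint)
    (.of_forall hbound)⟩

namespace IsLocAC

variable {f g f' g' : ℝ → ℝ} {a b : ℝ}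

theorem intervalIntegrable (hf : IsLocAC f f') (ha : 0 < a) (hab : a ≤ b) :
    IntervalIntegrable f' volume a b := (hf a b ha hab).1

theorem integral_eq (hf : IsLocAC f f') (ha : 0 < a) (hab : a ≤ b) :
    ∫ r in a..b, f' r = f b - f a := (hf a b ha hab).2.symm

theorem absolutelyContinuousOnInterval (hf : IsLocAC f f') (ha : 0 < a) (hab : a ≤ b) :
    AbsolutelyContinuousOnInterval f a b := by
  have hconst : AbsolutelyContinuousOnInterval (fun _ : ℝ => f a) a b :=
    ((LipschitzWith.const (f a)).lipschitzOnWith (s := uIcc a b)).absolutelyContinuousOnInterval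
  refine absolutelyContinuousOnInterval_congr
    (((hf.intervalIntegrable ha hab).absolutelyContinuousOnInterval_intervalIntegral
      left_mem_uIcc).add hconst) fun x hx => ?_
  rw [uIcc_of_le hab] at hx
  simp [hf.integral_eq ha hx.1]

theorem continuousOn (hf : IsLocAC f f') : ContinuousOn f (Ioi 0) := by
  intro x (hx : 0 < x)
  have h := (hf.absolutelyContinuousOnInterval (half_pos hx)
    (by linarith : x / 2 ≤ 2 * x)).continuousOn
  rw [uIcc_of_le (by linarith)] at h
  exact (h.continuousAt (Icc_mem_nhds (by linarith) (by linarith))).continuousWithinAt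

theorem ae_hasDerivAt_of_mem_Ioo (hf : IsLocAC f f') (ha : 0 < a) (hab : a ≤ b) :
    ∀ᵐ x, x ∈ Ioo a b → HasDerivAt f (f' x) x := by
  filter_upwards [(hf.intervalIntegrable ha hab).ae_hasDerivAt_integral] with x hx hmem
  have hprim : HasDerivAt (fun y => (∫ t in a..y, f' t) + f a) (f' x) x :=
    (hx (uIcc_of_le hab ▸ Ioo_subset_Icc_self hmem) _ left_mem_uIcc).add_const _
  refine hprim.congr_of_eventuallyEq ?_
  filter_upwards [Ioo_mem_nhds hmem.1 hmem.2] with y hy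
  rw [hf.integral_eq ha hy.1.le, sub_add_cancel]

theorem ae_hasDerivAt (hf : IsLocAC f f') :
    ∀ᵐ x ∂volume.restrict (Ioi (0 : ℝ)), HasDerivAt f (f' x) x := by
  have h := ae_all_iff.2 fun n : ℕ =>
    hf.ae_hasDerivAt_of_mem_Ioo Nat.one_div_pos_of_nat (one_div_natCast_add_one_le n)
  filter_upwards [ae_restrict_of_ae h, aecover_Ioi_zero_Ioo_one_div.ae_eventually_mem]
    with x hx hmem
  obtain ⟨n, hn⟩ := hmem.exists
  exact hx n hn

theorem of_ae_hasDerivAt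
    (h : ∀ a b : ℝ, 0 < a → a ≤ b → AbsolutelyContinuousOnInterval f a b)
    (hd : ∀ᵐ x ∂volume.restrict (Ioi (0 : ℝ)), HasDerivAt f (f' x) x) : IsLocAC f f' := by
  intro a b ha hab
  have hac := h a b ha hab
  have hderiv : deriv f =ᵐ[volume.restrict (uIoc a b)] f' := by
    rw [uIoc_of_le hab]
    filter_upwards [ae_restrict_Ioc_of_Ioi_zero ha b hd] with x hx using hx.deriv
  refine ⟨hac.intervalIntegrable_deriv.congr_ae hderiv, ?_⟩
  rw [← hac.integral_deriv_eq_sub]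
  exact intervalIntegral.integral_congr_ae_restrict hderiv

theorem of_hasDerivAt (h : ∀ x ∈ Ioi (0 : ℝ), HasDerivAt f (f' x) x)
    (hc : ContinuousOn f' (Ioi 0)) : IsLocAC f f' := by
  intro a b ha hab
  have hi := intervalIntegrable_of_continuousOn_Ioi_zero hc ha hab
  refine ⟨hi, (intervalIntegral.integral_eq_sub_of_hasDerivAt (fun x hx => h x ?_) hi).symm⟩
  exact ha.trans_le (uIcc_of_le hab ▸ hx).1

theorem add (hf : IsLocAC f f') (hg : IsLocAC g g') :
    IsLocAC (fun r => f r + g r) (fun r => f' r + g' r) := by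
  intro a b ha hab
  refine ⟨(hf.intervalIntegrable ha hab).add (hg.intervalIntegrable ha hab), ?_⟩
  rw [intervalIntegral.integral_add (hf.intervalIntegrable ha hab) (hg.intervalIntegrable ha hab),
    hf.integral_eq ha hab, hg.integral_eq ha hab]
  ring

theorem const_mul (c : ℝ) (hf : IsLocAC f f') :
    IsLocAC (fun r => c * f r) (fun r => c * f' r) := by
  intro a b ha hab
  refine ⟨(hf.intervalIntegrable ha hab).const_mul c, ?_⟩
  rw [intervalIntegral.integral_const_mul, hf.integral_eq ha hab]
  ring

theorem sub (hf : IsLocAC f f') (hg : IsLocAC g g') :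
    IsLocAC (fun r => f r - g r) (fun r => f' r - g' r) := by
  simpa only [sub_eq_add_neg, neg_one_mul] using hf.add (hg.const_mul (-1))

theorem mul (hf : IsLocAC f f') (hg : IsLocAC g g') :
    IsLocAC (fun r => f r * g r) (fun r => f' r * g r + f r * g' r) := by
  refine of_ae_hasDerivAt (fun a b ha hab => (hf.absolutelyContinuousOnInterval ha hab).mul
    (hg.absolutelyContinuousOnInterval ha hab)) ?_
  filter_upwards [hf.ae_hasDerivAt, hg.ae_hasDerivAt] with x hx hy using hx.mul hy

theorem comp_mul_left (hf : IsLocAC f f') {s : ℝ} (hs : 0 < s) :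
    IsLocAC (fun r => f (s * r)) (fun r => s * f' (s * r)) := by
  intro a b ha hab
  have hsa : 0 < s * a := mul_pos hs ha
  have hsab : s * a ≤ s * b := mul_le_mul_of_nonneg_left hab hs.le
  have hi : IntervalIntegrable (fun r => f' (s * r)) volume a b := by
    simpa [hs.ne'] using (hf.intervalIntegrable hsa hsab).comp_mul_left (c := s)
  refine ⟨hi.const_mul s, ?_⟩
  rw [intervalIntegral.integral_const_mul, ← smul_eq_mul,
    intervalIntegral.smul_integral_comp_mul_left, hf.integral_eq hsa hsab]

theorem integral_le_sub (hf : IsLocAC f f') (ha : 0 < a) (hab : a ≤ b)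
    (hg : IntervalIntegrable g volume a b)
    (h : ∀ᵐ x ∂volume.restrict (Ioi (0 : ℝ)), x ∈ Ioc a b → g x ≤ f' x) :
    ∫ r in a..b, g r ≤ f b - f a :=
  hf.integral_eq ha hab ▸
    intervalIntegral_mono_of_ae_Ioi_zero ha hab hg (hf.intervalIntegrable ha hab) h

theorem ae_eq_zero_of_eqOn_const (hf : IsLocAC f f') {c : ℝ} (hc : ∀ r ∈ Ioi (0 : ℝ), f r = c) :
    ∀ᵐ r ∂volume.restrict (Ioi (0 : ℝ)), f' r = 0 := by
  filter_upwards [hf.ae_hasDerivAt, ae_restrict_mem measurableSet_Ioi] with r hr hmem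
  have hconst : f =ᶠ[nhds r] fun _ => c := by
    filter_upwards [Ioi_mem_nhds hmem] with x hx using hc x hx
  exact hr.unique ((hasDerivAt_const r c).congr_of_eventuallyEq hconst)

theorem locACC (hf : IsLocAC f f') (hg : IsLocAC g g') :
    LocACC (fun r => (f r : ℂ) + (g r : ℂ) * Complex.I)
      (fun r => (f' r : ℂ) + (g' r : ℂ) * Complex.I) := by
  have hofReal {k k' : ℝ → ℝ} (hk : IsLocAC k k') (a b : ℝ) (ha : 0 < a) (hab : a ≤ b) :
      IntervalIntegrable (fun r => (k' r : ℂ)) volume a b :=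
    ⟨(hk.intervalIntegrable ha hab).1.ofReal, (hk.intervalIntegrable ha hab).2.ofReal⟩
  refine ⟨fun a b ha hab => (hofReal hf a b ha hab).add ((hofReal hg a b ha hab).mul_const _),
    fun a b ha hab => ?_⟩
  rw [intervalIntegral.integral_add (hofReal hf a b ha hab) ((hofReal hg a b ha hab).mul_const _),
    intervalIntegral.integral_mul_const, intervalIntegral.integral_ofReal,
    intervalIntegral.integral_ofReal, hf.integral_eq ha hab, hg.integral_eq ha hab]
  push_cast
  ring

end IsLocAC

section VectorAlgebra

variable (a b c : V3) (t : ℝ)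

theorem dot3_comm : dot3 a b = dot3 b a := by simp only [dot3]; ring

theorem dot3_add_right : dot3 a (b + c) = dot3 a b + dot3 a c := by
  simp only [dot3, Pi.add_apply]; ring

theorem dot3_sub_right : dot3 a (b - c) = dot3 a b - dot3 a c := by
  simp only [dot3, Pi.sub_apply]; ring

theorem dot3_smul_right : dot3 a (t • b) = t * dot3 a b := by
  simp only [dot3, Pi.smul_apply, smul_eq_mul]; ring

theorem dot3_add_left : dot3 (a + b) c = dot3 a c + dot3 b c := by
  rw [dot3_comm, dot3_add_right, dot3_comm c, dot3_comm c]

theorem dot3_sub_left : dot3 (a - b) c = dot3 a c - dot3 b c := by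
  rw [dot3_comm, dot3_sub_right, dot3_comm c, dot3_comm c]

theorem dot3_smul_left : dot3 (t • a) b = t * dot3 a b := by
  rw [dot3_comm, dot3_smul_right, dot3_comm b]

theorem dot3_self : dot3 a a = nsq3 a := by simp only [dot3, nsq3]; ring

theorem dot3_kHat_right : dot3 a kHat = a 2 := by simp [dot3, kHat]

theorem dot3_kHat_left : dot3 kHat a = a 2 := by rw [dot3_comm, dot3_kHat_right]

theorem nsq3_kHat : nsq3 kHat = 1 := by simp [nsq3, kHat]

theorem nsq3_nonneg : 0 ≤ nsq3 a := by unfold nsq3; positivity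

theorem nsq3_add : nsq3 (a + b) = nsq3 a + 2 * dot3 a b + nsq3 b := by
  simp only [nsq3, dot3, Pi.add_apply]; ring

theorem nsq3_sub : nsq3 (a - b) = nsq3 a - 2 * dot3 a b + nsq3 b := by
  simp only [nsq3, dot3, Pi.sub_apply]; ring

theorem nsq3_smul : nsq3 (t • a) = t ^ 2 * nsq3 a := by
  simp only [nsq3, Pi.smul_apply, smul_eq_mul]; ring

theorem nsq3_add_le : nsq3 (a + b) ≤ 2 * (nsq3 a + nsq3 b) := by
  linarith [nsq3_add a b, nsq3_sub a b, nsq3_nonneg (a - b)]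

theorem dot3_sq_le : dot3 a b ^ 2 ≤ nsq3 a * nsq3 b := by
  simp only [dot3, nsq3]
  nlinarith [sq_nonneg (a 0 * b 1 - a 1 * b 0), sq_nonneg (a 0 * b 2 - a 2 * b 0),
    sq_nonneg (a 1 * b 2 - a 2 * b 1)]

variable {t} in
theorem abs_dot3_le_young (ht : 0 < t) : |dot3 a b| ≤ t * nsq3 a + nsq3 b / (4 * t) := by
  have ha := nsq3_nonneg a
  have hb := nsq3_nonneg b
  refine abs_le_of_sq_le_sq ((dot3_sq_le a b).trans ?_) (by positivity)
  have hprod : t * nsq3 a * (nsq3 b / (4 * t)) = nsq3 a * nsq3 b / 4 := by field_simp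
  nlinarith [sq_nonneg (t * nsq3 a - nsq3 b / (4 * t))]

variable {a} in
theorem abs_apply_two_le_one (ha : nsq3 a = 1) : |a 2| ≤ 1 := by
  rw [abs_le_one_iff_mul_self_le_one, ← ha, nsq3]
  nlinarith [sq_nonneg (a 0), sq_nonneg (a 1)]

end VectorAlgebra

theorem nsq3_rotZ (α : ℝ) (a : V3) : nsq3 (rotZ α a) = nsq3 a := by
  simp only [nsq3, rotZ, Matrix.cons_val]
  linear_combination (a 0 ^ 2 + a 1 ^ 2) * Real.sin_sq_add_cos_sq α

theorem rotZ_rotZ (α β : ℝ) (a : V3) : rotZ α (rotZ β a) = rotZ (α + β) a := by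
  ext i
  fin_cases i <;> simp [rotZ, Real.cos_add, Real.sin_add] <;> ring

theorem rotZ_zero (a : V3) : rotZ 0 a = a := by
  ext i
  fin_cases i <;> simp [rotZ]

theorem rotZ_sub (α : ℝ) (a b : V3) : rotZ α (a - b) = rotZ α a - rotZ α b := by
  ext i
  fin_cases i <;> simp [rotZ] <;> ring

theorem rotZ_vertical (α c : ℝ) : rotZ α ![0, 0, c] = ![0, 0, c] := by
  ext i
  fin_cases i <;> simp [rotZ]

theorem continuous_rotZ (α : ℝ) : Continuous (rotZ α) := by
  refine continuous_pi fun i => ?_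
  fin_cases i <;> dsimp [rotZ] <;> fun_prop

theorem nsq3_rotZ_neg_sub_le {α : ℝ} (hα : 0 ≤ Real.cos α) (a : V3) :
    nsq3 (rotZ (-α) a - a) ≤ 2 * Real.sin α ^ 2 * nsq3 a := by
  have hchord : nsq3 (rotZ (-α) a - a) = 2 * (1 - Real.cos α) * (a 0 ^ 2 + a 1 ^ 2) := by
    simp only [nsq3, rotZ, Pi.sub_apply, Matrix.cons_val, Real.cos_neg, Real.sin_neg]
    linear_combination (a 0 ^ 2 + a 1 ^ 2) * Real.sin_sq_add_cos_sq α
  have hcos : 1 - Real.cos α ≤ Real.sin α ^ 2 := by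
    nlinarith [Real.sin_sq_add_cos_sq α, Real.cos_le_one α]
  have hhor : a 0 ^ 2 + a 1 ^ 2 ≤ nsq3 a := by
    rw [nsq3]; linarith [sq_nonneg (a 2)]
  rw [hchord]
  gcongr

namespace LocAC

variable {v dv w dw : ℝ → V3}

theorem component (hv : LocAC v dv) (i : Fin 3) : IsLocAC (fun r => v r i) (fun r => dv r i) :=
  fun a b ha hab => ⟨hv.1 a b ha hab i, hv.2 a b ha hab i⟩

theorem of_component (h : ∀ i, IsLocAC (fun r => v r i) (fun r => dv r i)) : LocAC v dv :=
  ⟨fun a b ha hab i => (h i a b ha hab).1, fun a b ha hab i => (h i a b ha hab).2⟩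

theorem continuousOn (hv : LocAC v dv) : ContinuousOn v (Ioi 0) :=
  continuousOn_pi.2 fun i => (hv.component i).continuousOn

theorem sub (hv : LocAC v dv) (hw : LocAC w dw) :
    LocAC (fun r => v r - w r) (fun r => dv r - dw r) :=
  of_component fun i => (hv.component i).sub (hw.component i)

theorem isLocAC_dot3 (hv : LocAC v dv) (hw : LocAC w dw) :
    IsLocAC (fun r => dot3 (v r) (w r)) (fun r => dot3 (dv r) (w r) + dot3 (v r) (dw r)) := by
  convert! (((hv.component 0).mul (hw.component 0)).add
    ((hv.component 1).mul (hw.component 1))).add ((hv.component 2).mul (hw.component 2)) using 2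
  simp only [dot3]
  ring

theorem isLocAC_nsq3 (hv : LocAC v dv) :
    IsLocAC (fun r => nsq3 (v r)) (fun r => 2 * dot3 (v r) (dv r)) := by
  convert! hv.isLocAC_dot3 hv using 2 with r r
  · rw [dot3_self]
  · rw [dot3_comm (dv r), two_mul]

theorem ae_dot3_deriv_eq_zero (hv : LocAC v dv) (hunit : ∀ r ∈ Ioi (0 : ℝ), nsq3 (v r) = 1) :
    ∀ᵐ r ∂volume.restrict (Ioi (0 : ℝ)), dot3 (v r) (dv r) = 0 := by
  filter_upwards [hv.isLocAC_nsq3.ae_eq_zero_of_eqOn_const hunit] with r hr using by linarith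

end LocAC

section Profile

variable (m : ℕ) {r : ℝ}

theorem h1f_eq (hr : 0 < r) : h1f m r = 2 * r ^ m / ((r ^ m) ^ 2 + 1) := by
  have : 0 < r ^ m := pow_pos hr m
  rw [h1f, zpow_neg, zpow_natCast]
  field_simp

theorem h3f_eq (hr : 0 < r) : h3f m r = ((r ^ m) ^ 2 - 1) / ((r ^ m) ^ 2 + 1) := by
  have : 0 < r ^ m := pow_pos hr m
  rw [h3f, zpow_neg, zpow_natCast]
  field_simp

theorem h1f_pos (hr : 0 < r) : 0 < h1f m r := by
  rw [h1f_eq m hr]; positivity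

theorem h1f_sq_add_h3f_sq (hr : 0 < r) : h1f m r ^ 2 + h3f m r ^ 2 = 1 := by
  have : 0 < r ^ m := pow_pos hr m
  rw [h1f_eq m hr, h3f_eq m hr]
  field_simp
  ring

theorem h1f_le_one (hr : 0 < r) : h1f m r ≤ 1 := by
  nlinarith [h1f_sq_add_h3f_sq m hr, h1f_pos m hr, sq_nonneg (h3f m r)]

theorem h1f_one : h1f m 1 = 1 := by rw [h1f_eq m one_pos]; norm_num

theorem h3f_one : h3f m 1 = 0 := by rw [h3f_eq m one_pos]; norm_num

theorem hasDerivAt_pow_eq_div_mul (hr : 0 < r) :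
    HasDerivAt (fun x : ℝ => x ^ m) ((m : ℝ) / r * r ^ m) r := by
  refine (hasDerivAt_pow m r).congr_deriv ?_
  rcases m with _ | n
  · simp
  · simp only [Nat.add_sub_cancel, pow_succ]; field_simp

theorem hasDerivAt_h1f (hr : 0 < r) :
    HasDerivAt (h1f m) (-((m : ℝ) / r) * h1f m r * h3f m r) r := by
  have : 0 < r ^ m := pow_pos hr m
  have hpow := hasDerivAt_pow_eq_div_mul m hr
  have hquot : HasDerivAt (fun x : ℝ => 2 * x ^ m / ((x ^ m) ^ 2 + 1)) _ r :=
    (hpow.const_mul 2).div ((hpow.pow 2).add_const 1) (by positivity)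
  have heq : h1f m =ᶠ[nhds r] fun x : ℝ => 2 * x ^ m / ((x ^ m) ^ 2 + 1) := by
    filter_upwards [lt_mem_nhds hr] with x hx using h1f_eq m hx
  refine (hquot.congr_of_eventuallyEq heq).congr_deriv ?_
  rw [h1f_eq m hr, h3f_eq m hr]
  field_simp
  push_cast
  ring

theorem hasDerivAt_h3f (hr : 0 < r) :
    HasDerivAt (h3f m) ((m : ℝ) / r * h1f m r ^ 2) r := by
  have : 0 < r ^ m := pow_pos hr m
  have hpow := hasDerivAt_pow_eq_div_mul m hr
  have hquot : HasDerivAt (fun x : ℝ => ((x ^ m) ^ 2 - 1) / ((x ^ m) ^ 2 + 1)) _ r :=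
    ((hpow.pow 2).sub_const 1).div ((hpow.pow 2).add_const 1) (by positivity)
  have heq : h3f m =ᶠ[nhds r] fun x : ℝ => ((x ^ m) ^ 2 - 1) / ((x ^ m) ^ 2 + 1) := by
    filter_upwards [lt_mem_nhds hr] with x hx using h3f_eq m hx
  refine (hquot.congr_of_eventuallyEq heq).congr_deriv ?_
  rw [h1f_eq m hr]
  simp only [Pi.pow_apply]
  field_simp
  push_cast
  ring

theorem continuousOn_h1f : ContinuousOn (h1f m) (Ioi 0) := fun _ hx =>
  (hasDerivAt_h1f m hx).continuousAt.continuousWithinAt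

theorem continuousOn_h3f : ContinuousOn (h3f m) (Ioi 0) := fun _ hx =>
  (hasDerivAt_h3f m hx).continuousAt.continuousWithinAt

theorem continuousOn_const_div_Ioi_zero (c : ℝ) : ContinuousOn (fun r : ℝ => c / r) (Ioi 0) :=
  continuousOn_const.div continuousOn_id fun _ hx => ne_of_gt hx

theorem isLocAC_h1f : IsLocAC (h1f m) (fun r => -((m : ℝ) / r) * h1f m r * h3f m r) :=
  .of_hasDerivAt (fun _ hx => hasDerivAt_h1f m hx)
    (((continuousOn_const_div_Ioi_zero _).neg.mul (continuousOn_h1f m)).mul (continuousOn_h3f m))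

theorem isLocAC_h3f : IsLocAC (h3f m) (fun r => (m : ℝ) / r * h1f m r ^ 2) :=
  .of_hasDerivAt (fun _ hx => hasDerivAt_h3f m hx)
    ((continuousOn_const_div_Ioi_zero _).mul ((continuousOn_h1f m).pow 2))

theorem isLocAC_zero : IsLocAC (fun _ => 0) (fun _ => 0) := fun _ _ _ _ => by simp

theorem locAC_hProf : LocAC (hProf m) (dhProf m) := by
  refine .of_component fun i => ?_
  fin_cases i
  exacts [isLocAC_h1f m, isLocAC_zero, isLocAC_h3f m]

/-- The vector `h(r) × ĵ`, which together with `h(r)` and `ĵ` forms an orthonormal frame. -/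
def hPerp (r : ℝ) : V3 := ![-(h3f m r), 0, h1f m r]

/-- The derivative `-(m/r) h₁ h` of `hPerp`. -/
def dhPerp (r : ℝ) : V3 := (-((m : ℝ) / r * h1f m r)) • hProf m r

theorem locAC_hPerp : LocAC (hPerp m) (dhPerp m) := by
  refine .of_component fun i => ?_
  fin_cases i
  · convert! (isLocAC_h3f m).const_mul (-1) using 2 <;> simp [hPerp, dhPerp, hProf]
    ring
  · convert! isLocAC_zero using 2
    simp [dhPerp, hProf]
  · convert! isLocAC_h1f m using 2
    simp [dhPerp, hProf]

theorem dhProf_eq (hr : 0 < r) :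
    dhProf m r = ((m : ℝ) / r) • (kHat - h3f m r • hProf m r) := by
  ext i
  have hsq : h1f m r ^ 2 = 1 - h3f m r * h3f m r := by linarith [h1f_sq_add_h3f_sq m hr]
  fin_cases i
  · simp only [dhProf, hProf, kHat, Fin.zero_eta, Pi.smul_apply, Pi.sub_apply, smul_eq_mul,
      Matrix.cons_val]
    ring
  · simp [dhProf, hProf, kHat]
  · simp [dhProf, hProf, kHat, hsq]

theorem nsq3_hProf (hr : 0 < r) : nsq3 (hProf m r) = 1 := by
  simpa [nsq3, hProf] using h1f_sq_add_h3f_sq m hr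

theorem nsq3_hPerp (hr : 0 < r) : nsq3 (hPerp m r) = 1 := by
  simpa [nsq3, hPerp, add_comm] using h1f_sq_add_h3f_sq m hr

theorem nsq3_eq_frame (hr : 0 < r) (a : V3) :
    nsq3 a = dot3 a (hProf m r) ^ 2 + a 1 ^ 2 + dot3 a (hPerp m r) ^ 2 := by
  simp only [nsq3, dot3, hProf, hPerp, Matrix.cons_val]
  linear_combination (-(a 0 ^ 2 + a 2 ^ 2)) * h1f_sq_add_h3f_sq m hr

theorem abs_h3f_le (hr : 1 / 2 ≤ r) : |h3f m r| ≤ 2 * m * |r - 1| := by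
  have hderiv (x : ℝ) (hx : x ∈ Ici (1 / 2 : ℝ)) :
      HasDerivWithinAt (h3f m) ((m : ℝ) / x * h1f m x ^ 2) (Ici (1 / 2)) x :=
    (hasDerivAt_h3f m (by linarith [mem_Ici.1 hx])).hasDerivWithinAt
  have hbound (x : ℝ) (hx : x ∈ Ici (1 / 2 : ℝ)) : ‖(m : ℝ) / x * h1f m x ^ 2‖ ≤ 2 * m := by
    have hx2 : 1 / 2 ≤ x := hx
    have hx0 : 0 < x := by linarith
    rw [Real.norm_of_nonneg (by positivity)]
    have hdiv : (m : ℝ) / x ≤ 2 * m := by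
      rw [div_le_iff₀ hx0]; nlinarith [(m.cast_nonneg : (0 : ℝ) ≤ m)]
    exact (mul_le_of_le_one_right (by positivity)
      (pow_le_one₀ (h1f_pos m hx0).le (h1f_le_one m hx0))).trans hdiv
  simpa [h3f_one] using (convex_Ici (1 / 2 : ℝ)).norm_image_sub_le_of_norm_hasDerivWithin_le
    hderiv hbound (by norm_num : (1 : ℝ) ∈ Ici (1 / 2 : ℝ)) hr

theorem nsq3_hProf_sub_hProf_one_le (hr : 1 / 2 ≤ r) :
    nsq3 (hProf m r - hProf m 1) ≤ 8 * m ^ 2 * (r - 1) ^ 2 := by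
  have hr0 : 0 < r := by linarith
  have hh := h1f_sq_add_h3f_sq m hr0
  have heq : nsq3 (hProf m r - hProf m 1) = 2 - 2 * h1f m r := by
    rw [nsq3_sub, nsq3_hProf m hr0, nsq3_hProf m one_pos]
    simp only [dot3, hProf, h1f_one, h3f_one, Matrix.cons_val]
    ring
  calc nsq3 (hProf m r - hProf m 1) ≤ 2 * h3f m r ^ 2 := by
        rw [heq]; nlinarith [h1f_pos m hr0, h1f_le_one m hr0]
    _ ≤ 2 * (2 * m * (r - 1)) ^ 2 := by
        gcongr 2 * ?_
        rw [sq_le_sq, abs_mul, abs_of_nonneg (by positivity : (0 : ℝ) ≤ 2 * m)]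
        exact abs_h3f_le m hr
    _ = 8 * m ^ 2 * (r - 1) ^ 2 := by ring

variable {m}

theorem div_le_mul_h3f (hm : 1 ≤ m) (hr : 1 ≤ r) : (r ^ 2 - 1) / (r ^ 2 + 1) ≤ m * h3f m r := by
  have hr0 : 0 < r := by linarith
  have hpow : r ≤ r ^ m := le_self_pow₀ hr (by omega)
  have hm' : (1 : ℝ) ≤ m := by exact_mod_cast hm
  have hle : (r ^ 2 - 1) / (r ^ 2 + 1) ≤ h3f m r := by
    rw [h3f_eq m hr0, div_le_div_iff₀ (by positivity) (by positivity)]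
    nlinarith
  have hnonneg : 0 ≤ (r ^ 2 - 1) / (r ^ 2 + 1) := div_nonneg (by nlinarith) (by positivity)
  nlinarith

theorem mul_h3f_le_div (hm : 1 ≤ m) (hr0 : 0 < r) (hr : r ≤ 1) :
    m * h3f m r ≤ (r ^ 2 - 1) / (r ^ 2 + 1) := by
  have hpow : r ^ m ≤ r := pow_le_of_le_one hr0.le hr (by omega)
  have hpow0 : 0 < r ^ m := pow_pos hr0 m
  have hm' : (1 : ℝ) ≤ m := by exact_mod_cast hm
  have hle : h3f m r ≤ (r ^ 2 - 1) / (r ^ 2 + 1) := by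
    rw [h3f_eq m hr0, div_le_div_iff₀ (by positivity) (by positivity)]
    nlinarith
  have hnonpos : (r ^ 2 - 1) / (r ^ 2 + 1) ≤ 0 :=
    div_nonpos_of_nonpos_of_nonneg (by nlinarith) (by positivity)
  nlinarith

end Profile

section Bogomolny

variable (m : ℕ) (v dv : ℝ → V3)

/-- The amount by which the energy exceeds its minimum `4πm` over `Σ_m`, divided by `π`. -/
def excess : ℝ := energy m v dv / π - 4 * m

/-- The horizontal part `k̂ - v₃ v` of `k̂`, tangent to the sphere at `v(r)`. -/
def tangentK (r : ℝ) : V3 := kHat - v r 2 • v r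

/-- The residual of the first order (Bogomolny) equation `v' = (m/r) (k̂ - v₃ v)` satisfied by
harmonic maps in `Σ_m`. -/
def bogoResidual (r : ℝ) : V3 := dv r - ((m : ℝ) / r) • tangentK v r

/-- The energy density minus the null Lagrangian `2m v₃'`. By completing the square it is a.e.
equal to `r |v' - (m/r) (k̂ - v₃ v)|²`. -/
def defect (r : ℝ) : ℝ := eDen m v dv r - 2 * m * dv r 2

variable {m v dv} {r : ℝ}

theorem deriv_eq_bogoResidual_add :
    dv r = bogoResidual m v dv r + ((m : ℝ) / r) • tangentK v r := by
  rw [bogoResidual, sub_add_cancel]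

theorem eDen_nonneg (hr : 0 < r) : 0 ≤ eDen m v dv r := by
  simp only [eDen, nsq3]; positivity

theorem dot3_tangentK (hunit : nsq3 (v r) = 1) : dot3 (v r) (tangentK v r) = 0 := by
  rw [tangentK, dot3_sub_right, dot3_smul_right, dot3_self, hunit, dot3_kHat_right]
  ring

theorem nsq3_tangentK (hunit : nsq3 (v r) = 1) : nsq3 (tangentK v r) = 1 - v r 2 ^ 2 := by
  rw [tangentK, nsq3_sub, nsq3_smul, dot3_smul_right, dot3_kHat_left, nsq3_kHat, hunit]
  ring

theorem tangentK_apply_two : tangentK v r 2 = 1 - v r 2 ^ 2 := by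
  simp only [tangentK, kHat, Pi.sub_apply, Pi.smul_apply, smul_eq_mul, Matrix.cons_val]
  ring

theorem dot3_bogoResidual (hunit : nsq3 (v r) = 1) (horth : dot3 (v r) (dv r) = 0) :
    dot3 (v r) (bogoResidual m v dv r) = 0 := by
  rw [bogoResidual, dot3_sub_right, dot3_smul_right, dot3_tangentK hunit, horth]
  ring

theorem defect_eq (hr : 0 < r) (hunit : nsq3 (v r) = 1) (horth : dot3 (v r) (dv r) = 0) :
    defect m v dv r = r * nsq3 (bogoResidual m v dv r) := by
  have hcross : dot3 (dv r) (tangentK v r) = dv r 2 := by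
    rw [tangentK, dot3_sub_right, dot3_smul_right, dot3_comm (dv r) (v r), horth, dot3_kHat_right]
    ring
  have hhor : v r 0 ^ 2 + v r 1 ^ 2 = 1 - v r 2 ^ 2 := by
    rw [← hunit, nsq3]; ring
  rw [bogoResidual, nsq3_sub, nsq3_smul, dot3_smul_right, hcross, nsq3_tangentK hunit, defect, eDen,
    hhor]
  field_simp
  ring

end Bogomolny

namespace InSigma

variable {m : ℕ} {v dv : ℝ → V3} {a b r : ℝ}

theorem locAC (h : InSigma m v dv) : LocAC v dv := h.1

theorem nsq3_eq_one (h : InSigma m v dv) (hr : 0 < r) : nsq3 (v r) = 1 := h.2.1 r hr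

theorem isLocAC_third (h : InSigma m v dv) : IsLocAC (fun r => v r 2) (fun r => dv r 2) :=
  h.locAC.component 2

theorem tendsto_third_zero (h : InSigma m v dv) :
    Tendsto (fun r => v r 2) (nhdsWithin 0 (Ioi 0)) (nhds (-1)) := by
  simpa [negkHat] using tendsto_pi_nhds.1 h.2.2.2.1 2

theorem tendsto_third_atTop (h : InSigma m v dv) :
    Tendsto (fun r => v r 2) atTop (nhds 1) := by
  simpa [kHat] using tendsto_pi_nhds.1 h.2.2.2.2 2

theorem ae_dot3_bogoResidual (h : InSigma m v dv) :
    ∀ᵐ r ∂volume.restrict (Ioi (0 : ℝ)), dot3 (v r) (bogoResidual m v dv r) = 0 := by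
  filter_upwards [h.locAC.ae_dot3_deriv_eq_zero h.2.1, ae_restrict_mem measurableSet_Ioi]
    with r horth hr using dot3_bogoResidual (h.nsq3_eq_one hr) horth

theorem ae_defect_eq (h : InSigma m v dv) :
    ∀ᵐ r ∂volume.restrict (Ioi (0 : ℝ)), defect m v dv r = r * nsq3 (bogoResidual m v dv r) := by
  filter_upwards [h.locAC.ae_dot3_deriv_eq_zero h.2.1, ae_restrict_mem measurableSet_Ioi]
    with r horth hr using defect_eq hr (h.nsq3_eq_one hr) horth

theorem ae_defect_nonneg (h : InSigma m v dv) :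
    ∀ᵐ r ∂volume.restrict (Ioi (0 : ℝ)), 0 ≤ defect m v dv r := by
  filter_upwards [h.ae_defect_eq, ae_restrict_mem measurableSet_Ioi] with r hdef hr
  rw [hdef]
  exact mul_nonneg (le_of_lt hr) (nsq3_nonneg _)

theorem intervalIntegrable_eDen (h : InSigma m v dv) (ha : 0 < a) (hab : a ≤ b) :
    IntervalIntegrable (eDen m v dv) volume a b :=
  (intervalIntegrable_iff_integrableOn_Ioc_of_le hab).2
    (h.2.2.1.mono_set (Ioc_subset_Ioi_zero ha b))

theorem intervalIntegrable_defect (h : InSigma m v dv) (ha : 0 < a) (hab : a ≤ b) :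
    IntervalIntegrable (defect m v dv) volume a b :=
  (h.intervalIntegrable_eDen ha hab).sub
    ((h.isLocAC_third.intervalIntegrable ha hab).const_mul (2 * (m : ℝ)))

theorem intervalIntegral_eDen_le (h : InSigma m v dv) (ha : 0 < a) (hab : a ≤ b) :
    ∫ r in a..b, eDen m v dv r ≤ energy m v dv / π := by
  rw [energy, mul_div_cancel_left₀ _ pi_ne_zero, intervalIntegral.integral_of_le hab]
  refine setIntegral_mono_set h.2.2.1 ?_ (Ioc_subset_Ioi_zero ha b).eventuallyLE
  filter_upwards [ae_restrict_mem measurableSet_Ioi] with r hr using eDen_nonneg hr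

theorem intervalIntegral_defect_le_sub (h : InSigma m v dv) (ha : 0 < a) (hab : a ≤ b) :
    ∫ r in a..b, defect m v dv r ≤ energy m v dv / π - 2 * m * (v b 2 - v a 2) := by
  have hdv := (h.isLocAC_third.intervalIntegrable ha hab).const_mul (2 * (m : ℝ))
  simp only [defect]
  rw [intervalIntegral.integral_sub (h.intervalIntegrable_eDen ha hab) hdv,
    intervalIntegral.integral_const_mul, h.isLocAC_third.integral_eq ha hab]
  linarith [h.intervalIntegral_eDen_le ha hab]

theorem intervalIntegral_defect_mono {c d : ℝ} (h : InSigma m v dv) (hc : 0 < c) (hca : c ≤ a)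
    (hab : a ≤ b) (hbd : b ≤ d) :
    ∫ r in a..b, defect m v dv r ≤ ∫ r in c..d, defect m v dv r :=
  intervalIntegral.integral_mono_interval hca hab hbd
    (ae_restrict_Ioc_of_Ioi_zero hc d h.ae_defect_nonneg)
    (h.intervalIntegrable_defect hc (hca.trans (hab.trans hbd)))

theorem intervalIntegral_defect_le_excess (h : InSigma m v dv) (ha : 0 < a) (hab : a ≤ b) :
    ∫ r in a..b, defect m v dv r ≤ excess m v dv := by
  have hfinite {c d : ℝ} (hc : 0 < c) (hca : c ≤ a) (hbd : b ≤ d) :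
      ∫ r in a..b, defect m v dv r ≤ energy m v dv / π - 2 * m * (v d 2 - v c 2) :=
    (h.intervalIntegral_defect_mono hc hca hab hbd).trans
      (h.intervalIntegral_defect_le_sub hc (hca.trans (hab.trans hbd)))
  have hright {c : ℝ} (hc : 0 < c) (hca : c ≤ a) :
      ∫ r in a..b, defect m v dv r ≤ energy m v dv / π - 2 * m * (1 - v c 2) := by
    refine ge_of_tendsto
      (((h.tendsto_third_atTop.sub_const (v c 2)).const_mul (2 * (m : ℝ))).const_sub _) ?_
    filter_upwards [eventually_ge_atTop b] with d hbd using hfinite hc hca hbd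
  have hboth : ∫ r in a..b, defect m v dv r ≤ energy m v dv / π - 2 * m * (1 - -1) := by
    refine ge_of_tendsto
      (((h.tendsto_third_zero.const_sub 1).const_mul (2 * (m : ℝ))).const_sub _) ?_
    filter_upwards [self_mem_nhdsWithin, nhdsWithin_le_nhds (Iic_mem_nhds ha)] with c hc hca
      using hright hc hca
  rw [excess]
  linarith

theorem excess_nonneg (h : InSigma m v dv) : 0 ≤ excess m v dv := by
  simpa using h.intervalIntegral_defect_le_excess one_pos le_rfl

theorem ae_neg_defect_le_third_deriv (h : InSigma m v dv) (hm : 1 ≤ m) :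
    ∀ᵐ r ∂volume.restrict (Ioi (0 : ℝ)), -(1 / (4 * (m : ℝ))) * defect m v dv r ≤ dv r 2 := by
  have hm0 : (0 : ℝ) < m := by exact_mod_cast hm
  filter_upwards [h.ae_defect_eq, h.ae_dot3_bogoResidual, ae_restrict_mem measurableSet_Ioi]
    with r hdef horth hr
  have hr : 0 < r := hr
  have hunit := h.nsq3_eq_one hr
  have hresidual : dot3 (tangentK v r) (bogoResidual m v dv r) = bogoResidual m v dv r 2 := by
    rw [tangentK, dot3_sub_left, dot3_smul_left, horth, dot3_kHat_left, mul_zero, sub_zero]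
  have hderiv : dv r 2 = bogoResidual m v dv r 2 + m / r * nsq3 (tangentK v r) := by
    rw [nsq3_tangentK hunit, ← tangentK_apply_two]
    exact congrFun deriv_eq_bogoResidual_add 2
  have hyoung := (abs_le.1 (abs_dot3_le_young (tangentK v r) (bogoResidual m v dv r)
    (div_pos hm0 hr))).1
  have hscale : nsq3 (bogoResidual m v dv r) / (4 * (m / r)) =
      1 / (4 * (m : ℝ)) * (r * nsq3 (bogoResidual m v dv r)) := by field_simp
  rw [hresidual, hscale] at hyoung
  rw [hdef, hderiv]
  linarith

theorem sub_excess_le_third (h : InSigma m v dv) (hm : 1 ≤ m) (ha : 0 < a) (hab : a ≤ b) :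
    v a 2 - excess m v dv / (4 * m) ≤ v b 2 := by
  have hint : ∫ r in a..b, -(1 / (4 * (m : ℝ))) * defect m v dv r ≤ v b 2 - v a 2 := by
    refine h.isLocAC_third.integral_le_sub ha hab
      ((h.intervalIntegrable_defect ha hab).const_mul _) ?_
    filter_upwards [h.ae_neg_defect_le_third_deriv hm] with r hr _ using hr
  rw [intervalIntegral.integral_const_mul] at hint
  have hle := mul_le_mul_of_nonneg_left (h.intervalIntegral_defect_le_excess ha hab)
    (by positivity : 0 ≤ 1 / (4 * (m : ℝ)))
  have hdiv : excess m v dv / (4 * m) = 1 / (4 * (m : ℝ)) * excess m v dv := by ring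
  linarith

end InSigma

section ProfileDistance

variable (m : ℕ) (v dv : ℝ → V3)

/-- The squared distance `|v(r) - h(r)|²` to the harmonic map profile. -/
def hdist (r : ℝ) : ℝ := nsq3 (v r - hProf m r)

variable {m v dv} {r : ℝ}

theorem hdist_nonneg : 0 ≤ hdist m v r := nsq3_nonneg _

theorem hdist_eq (hr : 0 < r) (hunit : nsq3 (v r) = 1) :
    hdist m v r = 2 - 2 * dot3 (v r) (hProf m r) := by
  rw [hdist, nsq3_sub, hunit, nsq3_hProf m hr]
  ring

theorem dot3_sub_sub_deriv_eq (hr : 0 < r) (hunit : nsq3 (v r) = 1) :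
    2 * dot3 (v r - hProf m r) (dv r - dhProf m r) + m * (h3f m r + v r 2) / r * hdist m v r =
      2 * dot3 (v r - hProf m r) (bogoResidual m v dv r) := by
  have hsub : dv r - dhProf m r =
      bogoResidual m v dv r + ((m : ℝ) / r) • (h3f m r • hProf m r - v r 2 • v r) := by
    rw [dhProf_eq m hr, bogoResidual, tangentK]
    module
  have hdot : dot3 (v r - hProf m r) (h3f m r • hProf m r - v r 2 • v r) =
      -(h3f m r + v r 2) * hdist m v r / 2 := by
    simp only [dot3_sub_left, dot3_sub_right, dot3_smul_right, dot3_self, hunit, nsq3_hProf m hr,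
      dot3_comm (hProf m r), hdist_eq hr hunit]
    ring
  rw [hsub, dot3_add_right, dot3_smul_right, hdot]
  ring

theorem weighted_le_right {P P' g A : ℝ} (hr : 1 ≤ r) (hP : 0 ≤ P) (hg : 0 ≤ g)
    (hA : (r ^ 2 - 1) / (r ^ 2 + 1) - 1 / 4 ≤ A) (hP' : P' + A / r * P ≤ P / (4 * r) + 4 * g) :
    P / (2 * r) - 8 * g ≤ -((-2 / r ^ 3) * P + (1 + 1 / r ^ 2) * P') := by
  have : 0 < r := by linarith
  have hinv : 1 / r ^ 2 ≤ 1 := by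
    rw [div_le_one (by positivity)]; exact one_le_pow₀ hr
  have hbound : P' ≤ P / (2 * r) + 4 * g - (r ^ 2 - 1) / (r ^ 2 + 1) * (P / r) := by
    have hmul := mul_le_mul_of_nonneg_right hA (by positivity : 0 ≤ P / r)
    have hhalf : P / (4 * r) + 1 / 4 * (P / r) = P / (2 * r) := by ring
    have hassoc : A / r * P = A * (P / r) := by ring
    linarith
  have hweight : (1 + 1 / r ^ 2) * (P / (2 * r) + 4 * g - (r ^ 2 - 1) / (r ^ 2 + 1) * (P / r)) =
      2 / r ^ 3 * P - (1 + 1 / r ^ 2) * (P / (2 * r)) + (1 + 1 / r ^ 2) * (4 * g) := by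
    field_simp
    ring
  have hscaled := mul_le_mul_of_nonneg_left hbound (by positivity : 0 ≤ 1 + 1 / r ^ 2)
  have hlower : 0 ≤ 1 / r ^ 2 * (P / (2 * r)) := by positivity
  have hupper := mul_le_mul_of_nonneg_right hinv hg
  rw [hweight] at hscaled
  linear_combination hscaled + hlower + 4 * hupper

theorem weighted_le_left {P P' g A : ℝ} (hr0 : 0 < r) (hr : r ≤ 1) (hP : 0 ≤ P) (hg : 0 ≤ g)
    (hA : A ≤ (r ^ 2 - 1) / (r ^ 2 + 1) + 1 / 4) (hP' : -(P / (4 * r) + 4 * g) ≤ P' + A / r * P) :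
    P / (2 * r) - 8 * g ≤ 2 * r * P + (1 + r ^ 2) * P' := by
  have hsq : r ^ 2 ≤ 1 := pow_le_one₀ hr0.le hr
  have hbound : -(P / (2 * r) + 4 * g) - (r ^ 2 - 1) / (r ^ 2 + 1) * (P / r) ≤ P' := by
    have hmul := mul_le_mul_of_nonneg_right hA (by positivity : 0 ≤ P / r)
    have hhalf : P / (4 * r) + 1 / 4 * (P / r) = P / (2 * r) := by ring
    have hassoc : A / r * P = A * (P / r) := by ring
    linarith
  have hweight : (1 + r ^ 2) * (-(P / (2 * r) + 4 * g) - (r ^ 2 - 1) / (r ^ 2 + 1) * (P / r)) =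
      -2 * r * P + (1 + r ^ 2) * (P / (2 * r)) - (1 + r ^ 2) * (4 * g) := by
    field_simp
    ring
  have hscaled := mul_le_mul_of_nonneg_left hbound (by positivity : 0 ≤ 1 + r ^ 2)
  have hlower : 0 ≤ r ^ 2 * (P / (2 * r)) := by positivity
  have hupper := mul_le_mul_of_nonneg_right hsq hg
  rw [hweight] at hscaled
  linear_combination hscaled + hlower + 4 * hupper

theorem isLocAC_one_add_one_div_sq : IsLocAC (fun r => 1 + 1 / r ^ 2) (fun r => -2 / r ^ 3) := by
  refine .of_hasDerivAt (fun x (hx : 0 < x) => ?_)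
    (continuousOn_const.div (by fun_prop) fun x (hx : 0 < x) => by positivity)
  refine (((hasDerivAt_const x 1).div (hasDerivAt_pow 2 x) (by positivity)).const_add 1).congr_deriv
    ?_
  field_simp
  norm_num [mul_comm]

theorem isLocAC_one_add_sq : IsLocAC (fun r => 1 + r ^ 2) (fun r => 2 * r) :=
  .of_hasDerivAt (fun x _ => by simpa [mul_comm] using (hasDerivAt_pow 2 x).const_add 1)
    (by fun_prop)

end ProfileDistance

namespace InSigma

variable {m : ℕ} {v dv : ℝ → V3} {a b r : ℝ}

theorem isLocAC_hdist (h : InSigma m v dv) :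
    IsLocAC (hdist m v) (fun r => 2 * dot3 (v r - hProf m r) (dv r - dhProf m r)) :=
  (h.locAC.sub (locAC_hProf m)).isLocAC_nsq3

theorem ae_abs_hdist_deriv_add_le (h : InSigma m v dv) :
    ∀ᵐ r ∂volume.restrict (Ioi (0 : ℝ)),
      |2 * dot3 (v r - hProf m r) (dv r - dhProf m r) + m * (h3f m r + v r 2) / r * hdist m v r| ≤
        hdist m v r / (4 * r) + 4 * defect m v dv r := by
  filter_upwards [h.ae_defect_eq, ae_restrict_mem measurableSet_Ioi] with r hdef hr
  have hr : 0 < r := hr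
  have hyoung := abs_dot3_le_young (v r - hProf m r) (bogoResidual m v dv r)
    (by positivity : 0 < 1 / (8 * r))
  rw [dot3_sub_sub_deriv_eq hr (h.nsq3_eq_one hr), abs_mul, abs_two, hdef]
  calc 2 * |dot3 (v r - hProf m r) (bogoResidual m v dv r)|
      ≤ 2 * (1 / (8 * r) * nsq3 (v r - hProf m r) +
          nsq3 (bogoResidual m v dv r) / (4 * (1 / (8 * r)))) := by gcongr
    _ = hdist m v r / (4 * r) + 4 * (r * nsq3 (bogoResidual m v dv r)) := by
        rw [hdist]; field_simp; ring

theorem neg_le_mul_third (h : InSigma m v dv) (hm : 1 ≤ m) (hv : m * |v 1 2| ≤ 1 / 8)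
    (hε : excess m v dv ≤ 1 / 2) (hr : 1 ≤ r) : -(1 / 4) ≤ m * v r 2 := by
  have hm0 : (0 : ℝ) < m := by exact_mod_cast hm
  have hmono := mul_le_mul_of_nonneg_left (h.sub_excess_le_third hm one_pos hr) hm0.le
  have hcancel : (m : ℝ) * (v 1 2 - excess m v dv / (4 * m)) = m * v 1 2 - excess m v dv / 4 := by
    field_simp
  have hone := mul_le_mul_of_nonneg_left (neg_abs_le (v 1 2)) hm0.le
  linarith

theorem mul_third_le (h : InSigma m v dv) (hm : 1 ≤ m) (hv : m * |v 1 2| ≤ 1 / 8)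
    (hε : excess m v dv ≤ 1 / 2) (hr0 : 0 < r) (hr : r ≤ 1) : m * v r 2 ≤ 1 / 4 := by
  have hm0 : (0 : ℝ) < m := by exact_mod_cast hm
  have hmono := mul_le_mul_of_nonneg_left (h.sub_excess_le_third hm hr0 hr) hm0.le
  have hcancel : (m : ℝ) * (v r 2 - excess m v dv / (4 * m)) = m * v r 2 - excess m v dv / 4 := by
    field_simp
  have hone := mul_le_mul_of_nonneg_left (le_abs_self (v 1 2)) hm0.le
  linarith

theorem intervalIntegrable_hdist_div (h : InSigma m v dv) (c : ℝ) (ha : 0 < a) (hab : a ≤ b) :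
    IntervalIntegrable (fun r => hdist m v r / (c * r)) volume a b := by
  refine intervalIntegrable_of_continuousOn_Ioi_zero ?_ ha hab
  simpa only [div_eq_mul_inv, mul_inv] using
    h.isLocAC_hdist.continuousOn.fun_mul (continuousOn_const_div_Ioi_zero c⁻¹)

-- The drift `m (h₃ + v₃) / r` is bounded below by `((r² - 1) / (r² + 1) - 1/4) / r` only, which is
-- negative near `r = 1`. The weight `φ = 1 + 1/r²` repairs this: `-r φ' / φ = 2 / (r² + 1)`, and
-- `(r² - 1) / (r² + 1) + 2 / (r² + 1) = 1`.
theorem hdist_add_integral_le_right (h : InSigma m v dv) (hm : 1 ≤ m) (hv : m * |v 1 2| ≤ 1 / 8)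
    (hε : excess m v dv ≤ 1 / 2) (hb : 1 ≤ b) :
    hdist m v b + ∫ r in 1..b, hdist m v r / (2 * r) ≤ 2 * hdist m v 1 + 8 * excess m v dv := by
  have hP := h.intervalIntegrable_hdist_div 2 one_pos hb
  have hdef := (h.intervalIntegrable_defect one_pos hb).const_mul 8
  have hint := ((isLocAC_one_add_one_div_sq.mul h.isLocAC_hdist).const_mul (-1)).integral_le_sub
    one_pos hb (hP.sub hdef) (by
      filter_upwards [h.ae_abs_hdist_deriv_add_le, h.ae_defect_nonneg] with r hderiv hnonneg hmem
      rw [neg_one_mul]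
      refine weighted_le_right hmem.1.le hdist_nonneg hnonneg ?_ (abs_le.1 hderiv).2
      linarith [div_le_mul_h3f hm hmem.1.le, h.neg_le_mul_third hm hv hε hmem.1.le])
  rw [intervalIntegral.integral_sub hP hdef, intervalIntegral.integral_const_mul] at hint
  have hweight : 0 ≤ 1 / b ^ 2 * hdist m v b := mul_nonneg (by positivity) hdist_nonneg
  linarith [h.intervalIntegral_defect_le_excess one_pos hb]

theorem hdist_add_integral_le_left (h : InSigma m v dv) (hm : 1 ≤ m) (hv : m * |v 1 2| ≤ 1 / 8)
    (hε : excess m v dv ≤ 1 / 2) (ha0 : 0 < a) (ha : a ≤ 1) :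
    hdist m v a + ∫ r in a..1, hdist m v r / (2 * r) ≤ 2 * hdist m v 1 + 8 * excess m v dv := by
  have hP := h.intervalIntegrable_hdist_div 2 ha0 ha
  have hdef := (h.intervalIntegrable_defect ha0 ha).const_mul 8
  have hint := (isLocAC_one_add_sq.mul h.isLocAC_hdist).integral_le_sub ha0 ha (hP.sub hdef) (by
    filter_upwards [h.ae_abs_hdist_deriv_add_le, h.ae_defect_nonneg] with r hderiv hnonneg hmem
    have hr0 : 0 < r := ha0.trans hmem.1
    refine weighted_le_left hr0 hmem.2 hdist_nonneg hnonneg ?_ (abs_le.1 hderiv).1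
    linarith [mul_h3f_le_div hm hr0 hmem.2, h.mul_third_le hm hv hε hr0 hmem.2])
  rw [intervalIntegral.integral_sub hP hdef, intervalIntegral.integral_const_mul] at hint
  have hweight : 0 ≤ a ^ 2 * hdist m v a := mul_nonneg (by positivity) hdist_nonneg
  linarith [h.intervalIntegral_defect_le_excess ha0 ha]

theorem hdist_le (h : InSigma m v dv) (hm : 1 ≤ m) (hv : m * |v 1 2| ≤ 1 / 8)
    (hε : excess m v dv ≤ 1 / 2) (hr : 0 < r) :
    hdist m v r ≤ 2 * hdist m v 1 + 8 * excess m v dv := by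
  have hnonneg {a b : ℝ} (ha : 0 < a) (hab : a ≤ b) : 0 ≤ ∫ r in a..b, hdist m v r / (2 * r) :=
    intervalIntegral.integral_nonneg hab fun x hx =>
      div_nonneg hdist_nonneg (by linarith [ha.trans_le hx.1])
  rcases le_total r 1 with hr1 | hr1
  · linarith [h.hdist_add_integral_le_left hm hv hε hr hr1, hnonneg hr hr1]
  · linarith [h.hdist_add_integral_le_right hm hv hε hr1, hnonneg one_pos hr1]

theorem integral_hdist_div_le (h : InSigma m v dv) (hm : 1 ≤ m) (hv : m * |v 1 2| ≤ 1 / 8)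
    (hε : excess m v dv ≤ 1 / 2) (ha0 : 0 < a) (ha : a ≤ 1) (hb : 1 ≤ b) :
    ∫ r in a..b, hdist m v r / r ≤ 8 * hdist m v 1 + 32 * excess m v dv := by
  have hdouble : ∫ r in a..b, hdist m v r / r = 2 * ∫ r in a..b, hdist m v r / (2 * r) := by
    rw [← intervalIntegral.integral_const_mul]
    congr 1 with r
    ring
  rw [hdouble, ← intervalIntegral.integral_add_adjacent_intervals
    (h.intervalIntegrable_hdist_div 2 ha0 ha) (h.intervalIntegrable_hdist_div 2 one_pos hb)]
  linarith [h.hdist_add_integral_le_left hm hv hε ha0 ha,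
    h.hdist_add_integral_le_right hm hv hε hb,
    hdist_nonneg (m := m) (v := v) (r := a), hdist_nonneg (m := m) (v := v) (r := b)]

end InSigma

theorem sq_norm_add_le {E : Type*} [SeminormedAddGroup E] (x y : E) :
    ‖x + y‖ ^ 2 ≤ 2 * (‖x‖ ^ 2 + ‖y‖ ^ 2) :=
  (pow_le_pow_left₀ (norm_nonneg _) (norm_add_le x y) 2).trans add_sq_le

section FrameCoordinate

variable (m : ℕ) (r : ℝ) (a b : V3) (t : ℝ)

/-- The complex coordinate, in the basis `ĵ`, `h(r) × ĵ` of the tangent plane of the sphere at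
`h(r)`, of the orthogonal projection of `a` to that plane. -/
def frameCoord : ℂ := a 1 + dot3 a (hPerp m r) * Complex.I

theorem frameCoord_add : frameCoord m r (a + b) = frameCoord m r a + frameCoord m r b := by
  simp only [frameCoord, dot3_add_left, Pi.add_apply]
  push_cast
  ring

theorem frameCoord_sub : frameCoord m r (a - b) = frameCoord m r a - frameCoord m r b := by
  simp only [frameCoord, dot3_sub_left, Pi.sub_apply]
  push_cast
  ring

theorem frameCoord_smul : frameCoord m r (t • a) = t * frameCoord m r a := by
  simp only [frameCoord, dot3_smul_left, Pi.smul_apply, smul_eq_mul]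
  push_cast
  ring

theorem frameCoord_kHat : frameCoord m r kHat = h1f m r * Complex.I := by
  simp [frameCoord, kHat, hPerp, dot3]

theorem sq_norm_frameCoord : ‖frameCoord m r a‖ ^ 2 = a 1 ^ 2 + dot3 a (hPerp m r) ^ 2 := by
  rw [← Complex.normSq_eq_norm_sq, frameCoord, Complex.normSq_add_mul_I]

variable {r} in
theorem sq_norm_frameCoord_le (hr : 0 < r) : ‖frameCoord m r a‖ ^ 2 ≤ nsq3 a := by
  rw [sq_norm_frameCoord, nsq3_eq_frame m hr a]
  linarith [sq_nonneg (dot3 a (hProf m r))]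

variable {r} in
theorem eq_add_Vrho (hr : 0 < r) :
    a = dot3 a (hProf m r) • hProf m r + Vrho m (frameCoord m r a) r := by
  have hh := h1f_sq_add_h3f_sq m hr
  ext i
  fin_cases i <;> simp [frameCoord, Vrho, dot3, hProf, hPerp, jHat]
  · linear_combination (-a 0) * hh
  · linear_combination (-a 2) * hh

end FrameCoordinate

section TangentialCoordinate

variable (m : ℕ) (v dv : ℝ → V3) (r : ℝ)

/-- The tangential coordinate `z` of the splitting `v = (1 + γ) h + V(z)`. -/
def tang : ℂ := frameCoord m r (v r)

/-- The derivative of `tang`. -/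
def dtang : ℂ :=
  dv r 1 + ((dot3 (dv r) (hPerp m r) + dot3 (v r) (dhPerp m r) : ℝ) : ℂ) * Complex.I

variable {m r v dv}

theorem sq_norm_tang (hr : 0 < r) (hunit : nsq3 (v r) = 1) :
    ‖tang m v r‖ ^ 2 = 1 - dot3 (v r) (hProf m r) ^ 2 := by
  rw [tang, sq_norm_frameCoord, ← hunit, nsq3_eq_frame m hr (v r)]
  ring

theorem sq_norm_tang_eq_hdist (hr : 0 < r) (hunit : nsq3 (v r) = 1) :
    ‖tang m v r‖ ^ 2 = hdist m v r - hdist m v r ^ 2 / 4 := by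
  rw [sq_norm_tang hr hunit, hdist_eq hr hunit]
  ring

theorem one_add_gamC_tang (hr : 0 < r) (hunit : nsq3 (v r) = 1) (hd : hdist m v r ≤ 2) :
    1 + gamC (tang m v) r = dot3 (v r) (hProf m r) := by
  have hdot : 0 ≤ dot3 (v r) (hProf m r) := by linarith [hdist_eq (m := m) hr hunit]
  rw [gamC, sq_norm_tang hr hunit, sub_sub_cancel, Real.sqrt_sq hdot, add_sub_cancel]

theorem eq_one_add_gamC_smul_hProf_add_Vrho (hr : 0 < r) (hunit : nsq3 (v r) = 1)
    (hd : hdist m v r ≤ 2) :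
    v r = (1 + gamC (tang m v) r) • hProf m r + Vrho m (tang m v r) r := by
  rw [one_add_gamC_tang hr hunit hd]
  exact eq_add_Vrho m (v r) hr

theorem dtang_eq (hr : 0 < r) (hunit : nsq3 (v r) = 1) :
    dtang m v dv r = frameCoord m r (bogoResidual m v dv r) +
      ((m / r : ℝ) : ℂ) * ((h1f m r * (hdist m v r / 2) : ℝ) * Complex.I - v r 2 * tang m v r) := by
  have hframe : dtang m v dv r =
      frameCoord m r (dv r) - ((m / r * h1f m r * dot3 (v r) (hProf m r) : ℝ) : ℂ) * Complex.I := by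
    simp only [dtang, frameCoord, dhPerp, dot3_smul_right]
    push_cast
    ring
  rw [hframe, deriv_eq_bogoResidual_add (m := m) (v := v) (dv := dv), frameCoord_add,
    frameCoord_smul, tangentK, frameCoord_sub, frameCoord_kHat, frameCoord_smul,
    hdist_eq hr hunit, tang]
  push_cast
  ring

theorem sq_norm_dtang_le (hr : 0 < r) (hunit : nsq3 (v r) = 1) :
    ‖dtang m v dv r‖ ^ 2 ≤
      2 * nsq3 (bogoResidual m v dv r) + 4 * (m / r) ^ 2 * hdist m v r := by
  have hdrift : ‖((h1f m r * (hdist m v r / 2) : ℝ) : ℂ) * Complex.I - v r 2 * tang m v r‖ ^ 2 ≤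
      2 * hdist m v r := by
    rw [sub_eq_add_neg]
    refine (sq_norm_add_le _ _).trans ?_
    have hh1 : h1f m r ^ 2 ≤ 1 := pow_le_one₀ (h1f_pos m hr).le (h1f_le_one m hr)
    have hv : v r 2 ^ 2 ≤ 1 := (sq_le_one_iff_abs_le_one _).2 (abs_apply_two_le_one hunit)
    have hfirst := mul_le_mul_of_nonneg_right hh1 (sq_nonneg (hdist m v r / 2))
    have hsecond := mul_le_mul_of_nonneg_right hv (sq_nonneg ‖tang m v r‖)
    simp only [norm_neg, norm_mul, Complex.norm_I, mul_one, Complex.norm_real, mul_pow,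
      Real.norm_eq_abs, sq_abs]
    linarith [sq_norm_tang_eq_hdist (m := m) hr hunit]
  rw [dtang_eq hr hunit]
  refine (sq_norm_add_le _ _).trans ?_
  rw [norm_mul, mul_pow, Complex.norm_real, Real.norm_eq_abs, sq_abs]
  have hscaled := mul_le_mul_of_nonneg_left hdrift (sq_nonneg ((m : ℝ) / r))
  linarith [sq_norm_frameCoord_le m (bogoResidual m v dv r) hr]

theorem xDen_nonneg {z dz : ℝ → ℂ} (hr : 0 < r) : 0 ≤ xDen z dz r := by
  rw [xDen]; positivity

end TangentialCoordinate

namespace InSigma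

variable {m : ℕ} {v dv : ℝ → V3} {a b r : ℝ}

theorem locACC_tang (h : InSigma m v dv) : LocACC (tang m v) (dtang m v dv) :=
  (h.locAC.component 1).locACC (h.locAC.isLocAC_dot3 (locAC_hPerp m))

theorem continuousOn_tang (h : InSigma m v dv) : ContinuousOn (tang m v) (Ioi 0) :=
  (Complex.continuous_ofReal.comp_continuousOn (h.locAC.component 1).continuousOn).add
    ((Complex.continuous_ofReal.comp_continuousOn
      (h.locAC.isLocAC_dot3 (locAC_hPerp m)).continuousOn).mul continuousOn_const)

theorem ae_xDen_le (h : InSigma m v dv) :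
    ∀ᵐ r ∂volume.restrict (Ioi (0 : ℝ)), xDen (tang m v) (dtang m v dv) r ≤
      (4 * (m : ℝ) ^ 2 + 1) * (hdist m v r / r) + 2 * defect m v dv r := by
  filter_upwards [h.ae_defect_eq, ae_restrict_mem measurableSet_Ioi] with r hdef hr
  have hr : 0 < r := hr
  have hunit := h.nsq3_eq_one hr
  have hz : ‖tang m v r‖ ^ 2 ≤ hdist m v r := by
    linarith [sq_norm_tang_eq_hdist (m := m) hr hunit, sq_nonneg (hdist m v r)]
  rw [hdef]
  calc xDen (tang m v) (dtang m v dv) r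
      ≤ (2 * nsq3 (bogoResidual m v dv r) + 4 * (m / r) ^ 2 * hdist m v r +
          hdist m v r / r ^ 2) * r := by
        rw [xDen]; gcongr; exact sq_norm_dtang_le hr hunit
    _ = (4 * (m : ℝ) ^ 2 + 1) * (hdist m v r / r) +
          2 * (r * nsq3 (bogoResidual m v dv r)) := by field_simp; ring

theorem intervalIntegrable_xDen_bound (h : InSigma m v dv) (ha : 0 < a) (hab : a ≤ b) :
    IntervalIntegrable
      (fun r => (4 * (m : ℝ) ^ 2 + 1) * (hdist m v r / r) + 2 * defect m v dv r) volume a b := by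
  simpa using ((h.intervalIntegrable_hdist_div 1 ha hab).const_mul _).add
    ((h.intervalIntegrable_defect ha hab).const_mul 2)

theorem intervalIntegrable_xDen (h : InSigma m v dv) (ha : 0 < a) (hab : a ≤ b) :
    IntervalIntegrable (xDen (tang m v) (dtang m v dv)) volume a b := by
  rw [intervalIntegrable_iff_integrableOn_Ioc_of_le hab]
  refine Integrable.mono' (h.intervalIntegrable_xDen_bound ha hab).1 ?_ ?_
  · have hderiv := ((h.locACC_tang.1 a b ha hab).1.aestronglyMeasurable.norm.pow 2)
    have hcont : ContinuousOn (fun r => ‖tang m v r‖ ^ 2 / r ^ 2) (Ioi 0) :=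
      (h.continuousOn_tang.norm.pow 2).div (by fun_prop) fun x hx => pow_ne_zero 2 (ne_of_gt hx)
    exact (hderiv.add ((hcont.mono (Ioc_subset_Ioi_zero ha b)).aestronglyMeasurable
      measurableSet_Ioc)).mul continuous_id.aestronglyMeasurable
  · filter_upwards [ae_restrict_Ioc_of_Ioi_zero ha b h.ae_xDen_le,
      ae_restrict_mem measurableSet_Ioc] with r hle hr
    rwa [Real.norm_of_nonneg (xDen_nonneg (ha.trans hr.1))]

theorem integral_xDen_le (h : InSigma m v dv) (hm : 1 ≤ m) (hv : m * |v 1 2| ≤ 1 / 8)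
    (hε : excess m v dv ≤ 1 / 2) :
    IntegrableOn (xDen (tang m v) (dtang m v dv)) (Ioi 0) ∧
      ∫ r in Ioi (0 : ℝ), xDen (tang m v) (dtang m v dv) r ≤
        (4 * (m : ℝ) ^ 2 + 1) * (8 * hdist m v 1 + 32 * excess m v dv) + 2 * excess m v dv := by
  refine integrableOn_Ioi_of_intervalIntegral_le
    (fun a b ha hab => h.intervalIntegrable_xDen ha hab) ?_ fun a b ha ha1 hb => ?_
  · filter_upwards [ae_restrict_mem measurableSet_Ioi] with r hr using xDen_nonneg hr
  have hab := ha1.trans hb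
  have hle : ∫ r in a..b, xDen (tang m v) (dtang m v dv) r ≤
      ∫ r in a..b, ((4 * (m : ℝ) ^ 2 + 1) * (hdist m v r / r) + 2 * defect m v dv r) :=
    intervalIntegral_mono_of_ae_Ioi_zero ha hab (h.intervalIntegrable_xDen ha hab)
      (h.intervalIntegrable_xDen_bound ha hab)
      (by filter_upwards [h.ae_xDen_le] with r hr _ using hr)
  have hdist_int : IntervalIntegrable (fun r => hdist m v r / r) volume a b := by
    simpa using h.intervalIntegrable_hdist_div 1 ha hab
  rw [intervalIntegral.integral_add (hdist_int.const_mul _)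
    ((h.intervalIntegrable_defect ha hab).const_mul 2), intervalIntegral.integral_const_mul,
    intervalIntegral.integral_const_mul] at hle
  refine hle.trans (add_le_add ?_ ?_)
  · gcongr; exact h.integral_hdist_div_le hm hv hε ha ha1 hb
  · gcongr; exact h.intervalIntegral_defect_le_excess ha hab

end InSigma

section Rescaling

variable (s α : ℝ) (v dv : ℝ → V3) (r : ℝ)

/-- The profile `v` dilated by `s` and rotated by `-α`. -/
def rescale : V3 := rotZ (-α) (v (s * r))

/-- The derivative of `rescale`. -/
def drescale : V3 := s • rotZ (-α) (dv (s * r))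

theorem rescale_apply_zero :
    rescale s α v r 0 = Real.cos α * v (s * r) 0 + Real.sin α * v (s * r) 1 := by
  simp [rescale, rotZ]

theorem rescale_apply_one :
    rescale s α v r 1 = -Real.sin α * v (s * r) 0 + Real.cos α * v (s * r) 1 := by
  simp [rescale, rotZ]

theorem rescale_apply_two : rescale s α v r 2 = v (s * r) 2 := rfl

theorem nsq3_rescale : nsq3 (rescale s α v r) = nsq3 (v (s * r)) := nsq3_rotZ _ _

theorem nsq3_drescale : nsq3 (drescale s α dv r) = s ^ 2 * nsq3 (dv (s * r)) := by
  rw [drescale, nsq3_smul, nsq3_rotZ]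

theorem rescale_rescale (s' α' : ℝ) :
    rescale s' α' (rescale s α v) = rescale (s * s') (α + α') v := by
  ext r : 1
  rw [rescale, rescale, rescale, rotZ_rotZ, mul_assoc, neg_add_rev]

variable {s}

theorem eq_rotZ_rescale (hs : 0 < s) : v r = rotZ α (rescale s α v (r / s)) := by
  rw [rescale, rotZ_rotZ, mul_div_cancel₀ _ hs.ne', add_neg_cancel, rotZ_zero]

theorem eDen_rescale (hs : 0 < s) (m : ℕ) :
    eDen m (rescale s α v) (drescale s α dv) r = s * eDen m v dv (s * r) := by
  have hhor (a : V3) : a 0 ^ 2 + a 1 ^ 2 = nsq3 a - a 2 ^ 2 := by rw [nsq3]; ring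
  rw [eDen, eDen, nsq3_drescale, hhor, nsq3_rescale, rescale_apply_two, hhor]
  rcases eq_or_ne r 0 with rfl | hr
  · simp
  · field_simp

theorem energy_rescale (hs : 0 < s) (m : ℕ) :
    energy m (rescale s α v) (drescale s α dv) = energy m v dv := by
  simp only [energy, eDen_rescale α v dv _ hs m]
  rw [integral_const_mul, integral_comp_mul_left_Ioi (eDen m v dv) 0 hs, mul_zero, smul_eq_mul,
    mul_inv_cancel_left₀ hs.ne']

theorem excess_rescale (hs : 0 < s) (m : ℕ) :
    excess m (rescale s α v) (drescale s α dv) = excess m v dv := by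
  rw [excess, excess, energy_rescale α v dv hs m]

variable {v dv}

theorem locAC_rescale (hs : 0 < s) (hv : LocAC v dv) : LocAC (rescale s α v) (drescale s α dv) := by
  have hdil (i : Fin 3) := (hv.component i).comp_mul_left hs
  refine LocAC.of_component fun i => ?_
  fin_cases i
  · convert! ((hdil 0).const_mul (Real.cos α)).add ((hdil 1).const_mul (Real.sin α)) using 2
      with r r
    · simp [rescale_apply_zero]
    · simp [drescale, rotZ]; ring
  · convert! ((hdil 0).const_mul (-Real.sin α)).add ((hdil 1).const_mul (Real.cos α)) using 2
      with r r
    · simp [rescale_apply_one]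
    · simp [drescale, rotZ]; ring
  · exact hdil 2

theorem tendsto_const_mul_nhdsGT_zero (hs : 0 < s) :
    Tendsto (fun r => s * r) (nhdsWithin 0 (Ioi 0)) (nhdsWithin 0 (Ioi 0)) := by
  refine tendsto_nhdsWithin_iff.2 ⟨?_, ?_⟩
  · simpa using ((continuous_const_mul s).tendsto 0).mono_left nhdsWithin_le_nhds
  · filter_upwards [self_mem_nhdsWithin] with r hr using mul_pos hs hr

theorem inSigma_rescale (hs : 0 < s) {m : ℕ} (h : InSigma m v dv) :
    InSigma m (rescale s α v) (drescale s α dv) := by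
  refine ⟨locAC_rescale α hs h.locAC, fun r hr => ?_, ?_, ?_, ?_⟩
  · rw [nsq3_rescale, h.nsq3_eq_one (mul_pos hs hr)]
  · refine IntegrableOn.congr_fun (((integrableOn_Ioi_comp_mul_left_iff (eDen m v dv) 0 hs).2
      (by simpa using h.2.2.1)).const_mul s) (fun r _ => ?_) measurableSet_Ioi
    exact (eDen_rescale α v dv r hs m).symm
  · rw [show negkHat = rotZ (-α) negkHat from (rotZ_vertical _ _).symm]
    exact ((continuous_rotZ (-α)).tendsto negkHat).comp
      (h.2.2.2.1.comp (tendsto_const_mul_nhdsGT_zero hs))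
  · rw [show kHat = rotZ (-α) kHat from (rotZ_vertical _ _).symm]
    exact ((continuous_rotZ (-α)).tendsto kHat).comp
      (h.2.2.2.2.comp (tendsto_id.const_mul_atTop hs))

end Rescaling

section Weight

variable (m : ℕ) {ρ : ℝ}

/-- The weight `h₁(ρ) ρ` of the orthogonality condition. -/
def wt (ρ : ℝ) : ℝ := h1f m ρ * ρ

/-- The measure `h₁(ρ) ρ dρ` on `(0,∞)` of the orthogonality condition. -/
def wtMeasure : Measure ℝ := (volume.restrict (Ioi 0)).withDensity fun ρ => ENNReal.ofReal (wt m ρ)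

theorem wt_pos (hρ : 0 < ρ) : 0 < wt m ρ := mul_pos (h1f_pos m hρ) hρ

theorem wt_le {m : ℕ} (hm : 3 ≤ m) (hρ : 0 < ρ) : wt m ρ ≤ 4 * (1 + ρ ^ 2)⁻¹ := by
  have hp : 0 < ρ ^ m := pow_pos hρ m
  rw [wt, h1f_eq m hρ, div_mul_eq_mul_div, ← div_eq_mul_inv,
    div_le_div_iff₀ (by positivity) (by positivity)]
  rcases le_total ρ 1 with h | h
  · have hle : ρ ^ m ≤ 1 := pow_le_one₀ hρ.le h
    nlinarith [mul_le_one₀ hle hρ.le h, sq_nonneg (ρ ^ m), pow_le_one₀ hρ.le h (n := 2),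
      pow_pos hρ 2, mul_pos hp hρ]
  · have hle : ρ ^ 3 ≤ ρ ^ m := pow_le_pow_right₀ h hm
    have hcube : ρ * (1 + ρ ^ 2) ≤ 2 * ρ ^ m := by nlinarith [mul_nonneg hρ.le (sub_nonneg.2 h)]
    nlinarith [mul_le_mul_of_nonneg_left hcube hp.le]

theorem continuousOn_wt : ContinuousOn (wt m) (Ioi 0) := (continuousOn_h1f m).mul continuousOn_id

theorem aemeasurable_wt : AEMeasurable (wt m) (volume.restrict (Ioi 0)) :=
  (continuousOn_wt m).aemeasurable measurableSet_Ioi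

theorem integrableOn_wt {m : ℕ} (hm : 3 ≤ m) : IntegrableOn (wt m) (Ioi 0) := by
  refine (integrable_inv_one_add_sq.integrableOn.const_mul 4).mono'
    (aemeasurable_wt m).aestronglyMeasurable ?_
  filter_upwards [ae_restrict_mem measurableSet_Ioi] with ρ hρ
  rw [Real.norm_of_nonneg (wt_pos m hρ).le]
  exact wt_le hm hρ

theorem isFiniteMeasure_wtMeasure {m : ℕ} (hm : 3 ≤ m) : IsFiniteMeasure (wtMeasure m) :=
  isFiniteMeasure_withDensity_ofReal (integrableOn_wt hm).2

theorem wtMeasure_absolutelyContinuous : wtMeasure m ≪ volume.restrict (Ioi 0) :=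
  withDensity_absolutelyContinuous _ _

theorem ae_wtMeasure_pos : ∀ᵐ ρ ∂wtMeasure m, 0 < ρ :=
  (wtMeasure_absolutelyContinuous m).ae_le (ae_restrict_mem measurableSet_Ioi)

theorem wtMeasure_ne_zero : wtMeasure m ≠ 0 := by
  intro h
  have hzero := (withDensity_eq_zero_iff (aemeasurable_wt m).ennreal_ofReal).1 h
  have : (ae (volume.restrict (Ioi (0 : ℝ)))).NeBot :=
    ae_restrict_neBot.2 (by rw [Real.volume_Ioi]; exact ENNReal.top_ne_zero)
  obtain ⟨ρ, hρ0, hρ⟩ := (hzero.and (ae_restrict_mem measurableSet_Ioi)).exists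
  exact (ENNReal.ofReal_pos.2 (wt_pos m hρ)).ne' hρ0

theorem integral_wtMeasure {E : Type*} [NormedAddCommGroup E] [NormedSpace ℝ E] (f : ℝ → E) :
    ∫ ρ, f ρ ∂wtMeasure m = ∫ ρ in Ioi (0 : ℝ), wt m ρ • f ρ := by
  rw [wtMeasure, integral_withDensity_eq_integral_toReal_smul₀ (aemeasurable_wt m).ennreal_ofReal
    (.of_forall fun _ => ENNReal.ofReal_lt_top)]
  refine setIntegral_congr_fun measurableSet_Ioi fun ρ hρ => ?_
  rw [ENNReal.toReal_ofReal (wt_pos m hρ).le]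

variable {m} {f g : ℝ → ℝ} {c : ℝ}

theorem aestronglyMeasurable_wtMeasure {E : Type*} [TopologicalSpace E]
    [TopologicalSpace.PseudoMetrizableSpace E] {f : ℝ → E} (hf : ContinuousOn f (Ioi 0)) :
    AEStronglyMeasurable f (wtMeasure m) :=
  (hf.aestronglyMeasurable measurableSet_Ioi).mono_ac (wtMeasure_absolutelyContinuous m)

theorem integral_wtMeasure_mono (hf : Integrable f (wtMeasure m)) (hg : Integrable g (wtMeasure m))
    (h : ∀ ρ, 0 < ρ → f ρ ≤ g ρ) : ∫ ρ, f ρ ∂wtMeasure m ≤ ∫ ρ, g ρ ∂wtMeasure m := by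
  refine integral_mono_ae hf hg ?_
  filter_upwards [ae_wtMeasure_pos m] with ρ hρ using h ρ hρ

variable [IsFiniteMeasure (wtMeasure m)]

theorem integrable_wtMeasure (hf : ContinuousOn f (Ioi 0)) (hb : ∀ ρ, 0 < ρ → |f ρ| ≤ c) :
    Integrable f (wtMeasure m) := by
  refine Integrable.of_bound (aestronglyMeasurable_wtMeasure hf) c ?_
  filter_upwards [ae_wtMeasure_pos m] with ρ hρ using hb ρ hρ

theorem abs_integral_wtMeasure_le (hb : ∀ ρ, 0 < ρ → |f ρ| ≤ c) :
    |∫ ρ, f ρ ∂wtMeasure m| ≤ c * (wtMeasure m).real univ := by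
  rw [← Real.norm_eq_abs]
  refine norm_integral_le_of_norm_le_const ?_
  filter_upwards [ae_wtMeasure_pos m] with ρ hρ using hb ρ hρ

theorem abs_integral_wtMeasure_sub_le (hf : Integrable f (wtMeasure m))
    (hg : Integrable g (wtMeasure m)) (hb : ∀ ρ, 0 < ρ → |f ρ - g ρ| ≤ c) :
    |∫ ρ, f ρ ∂wtMeasure m - ∫ ρ, g ρ ∂wtMeasure m| ≤ c * (wtMeasure m).real univ := by
  rw [← integral_sub hf hg]
  exact abs_integral_wtMeasure_le hb

theorem continuousOn_integral_wtMeasure {S : Set ℝ} {F : ℝ → ℝ → ℝ}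
    (hF : ∀ s ∈ S, ContinuousOn (F s) (Ioi 0)) (hFS : ∀ ρ, 0 < ρ → ContinuousOn (F · ρ) S)
    (hb : ∀ s ∈ S, ∀ ρ, 0 < ρ → |F s ρ| ≤ c) :
    ContinuousOn (fun s => ∫ ρ, F s ρ ∂wtMeasure m) S := by
  refine continuousOn_of_dominated (fun s hs => aestronglyMeasurable_wtMeasure (hF s hs))
    (fun s hs => ?_) (integrable_const c) ?_
  · filter_upwards [ae_wtMeasure_pos m] with ρ hρ using hb s hs ρ hρ
  · filter_upwards [ae_wtMeasure_pos m] with ρ hρ using hFS ρ hρ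

end Weight

section Gap

variable (m : ℕ) {s ρ : ℝ}

theorem abs_h1f_le_one (hρ : 0 < ρ) : |h1f m ρ| ≤ 1 := by
  rw [abs_of_pos (h1f_pos m hρ)]
  exact h1f_le_one m hρ

/-- A lower bound for the integrals of `h₁(sρ)` and, per unit of dilation, of the tangential
component of `h(sρ)` against `wtMeasure`, uniformly for `s` close to `1`. -/
def gap : ℝ := ∫ ρ, (1 / 2) ^ m * h1f m ρ ∂wtMeasure m

theorem half_pow_mul_h1f_le (hs : 1 / 2 ≤ s) (hs2 : s ≤ 2) (hρ : 0 < ρ) :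
    (1 / 2) ^ m * h1f m ρ ≤ h1f m (s * ρ) := by
  have hs0 : 0 < s := by linarith
  have hlow : (1 / 2 : ℝ) ^ m ≤ s ^ m := pow_le_pow_left₀ (by norm_num) hs m
  have hup : (1 / 2 : ℝ) ^ m * s ^ m ≤ 1 := by
    rw [← mul_pow]; exact pow_le_one₀ (by positivity) (by linarith)
  have hx : 0 < ρ ^ m := pow_pos hρ m
  have ht : 0 < s ^ m := pow_pos hs0 m
  rw [h1f_eq m hρ, h1f_eq m (mul_pos hs0 hρ), mul_pow, ← mul_div_assoc,
    div_le_div_iff₀ (by positivity) (by positivity)]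
  have hfactor : (1 / 2) ^ m * ((s ^ m * ρ ^ m) ^ 2 + 1) ≤ s ^ m * ((ρ ^ m) ^ 2 + 1) := by
    nlinarith [mul_le_mul_of_nonneg_right hup (mul_pos ht (pow_pos hx 2)).le]
  nlinarith [mul_le_mul_of_nonneg_left hfactor hx.le]

theorem dot3_hProf_mul_hPerp (hs : 0 < s) (hρ : 0 < ρ) :
    dot3 (hProf m (s * ρ)) (hPerp m ρ) =
      (s ^ m - 1) * (h1f m ρ * ((s ^ m * (ρ ^ m) ^ 2 + 1) / ((s ^ m * ρ ^ m) ^ 2 + 1))) := by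
  have : 0 < ρ ^ m := pow_pos hρ m
  simp only [dot3, hProf, hPerp, Matrix.cons_val]
  rw [h1f_eq m hρ, h3f_eq m hρ, h1f_eq m (mul_pos hs hρ), h3f_eq m (mul_pos hs hρ), mul_pow]
  field_simp
  ring

theorem half_pow_le_dilation_factor (hs : 0 < s) (hs2 : s ≤ 2) :
    (1 / 2) ^ m ≤ (s ^ m * (ρ ^ m) ^ 2 + 1) / ((s ^ m * ρ ^ m) ^ 2 + 1) := by
  have hup : (1 / 2 : ℝ) ^ m * s ^ m ≤ 1 := by
    rw [← mul_pow]; exact pow_le_one₀ (by positivity) (by linarith)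
  have hone : (1 / 2 : ℝ) ^ m ≤ 1 := pow_le_one₀ (by norm_num) (by norm_num)
  rw [le_div_iff₀ (by positivity)]
  nlinarith [mul_le_mul_of_nonneg_right hup (mul_nonneg (pow_pos hs m).le (sq_nonneg (ρ ^ m)))]

theorem sub_one_mul_le_dot3_hProf_mul_hPerp (hm : m ≠ 0) (hs : 1 ≤ s) (hs2 : s ≤ 2) (hρ : 0 < ρ) :
    (s - 1) * ((1 / 2) ^ m * h1f m ρ) ≤ dot3 (hProf m (s * ρ)) (hPerp m ρ) := by
  have hpow : s - 1 ≤ s ^ m - 1 := sub_le_sub_right (le_self_pow₀ hs hm) 1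
  rw [dot3_hProf_mul_hPerp m (by linarith) hρ, mul_comm ((1 / 2) ^ m)]
  have hh := (h1f_pos m hρ).le
  exact mul_le_mul hpow (mul_le_mul_of_nonneg_left
    (half_pow_le_dilation_factor m (by linarith) hs2) hh) (by positivity) (by linarith)

theorem dot3_hProf_mul_hPerp_le_sub_one_mul (hm : m ≠ 0) (hs : 0 < s) (hs1 : s ≤ 1) (hρ : 0 < ρ) :
    dot3 (hProf m (s * ρ)) (hPerp m ρ) ≤ (s - 1) * ((1 / 2) ^ m * h1f m ρ) := by
  have hpow : s ^ m - 1 ≤ s - 1 := sub_le_sub_right (pow_le_of_le_one hs.le hs1 hm) 1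
  rw [dot3_hProf_mul_hPerp m hs hρ, mul_comm ((1 / 2) ^ m)]
  have hh := (h1f_pos m hρ).le
  have hfactor := mul_le_mul_of_nonneg_left
    (half_pow_le_dilation_factor m (ρ := ρ) hs (by linarith)) hh
  calc _ ≤ (s ^ m - 1) * (h1f m ρ * (1 / 2) ^ m) :=
        mul_le_mul_of_nonpos_left hfactor (by linarith)
    _ ≤ _ := mul_le_mul_of_nonneg_right hpow (by positivity)

theorem continuousOn_dot3_hPerp {a : ℝ → V3} (ha : ContinuousOn a (Ioi 0)) :
    ContinuousOn (fun ρ => dot3 (a ρ) (hPerp m ρ)) (Ioi 0) := by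
  simp only [dot3, hPerp, Matrix.cons_val]
  have hcomp (i : Fin 3) : ContinuousOn (fun ρ => a ρ i) (Ioi 0) := continuousOn_pi.1 ha i
  exact (((hcomp 0).mul (continuousOn_h3f m).neg).add ((hcomp 1).mul continuousOn_const)).add
    ((hcomp 2).mul (continuousOn_h1f m))

theorem abs_dot3_hPerp_le (hρ : 0 < ρ) {a : V3} {c : ℝ} (hc : 0 ≤ c) (ha : nsq3 a ≤ c ^ 2) :
    |dot3 a (hPerp m ρ)| ≤ c := by
  refine abs_le_of_sq_le_sq ?_ hc
  simpa [nsq3_hPerp m hρ] using (dot3_sq_le a (hPerp m ρ)).trans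
    (mul_le_mul_of_nonneg_right ha (nsq3_nonneg _))

theorem continuousOn_comp_mul_left {E : Type*} [TopologicalSpace E] {f : ℝ → E}
    (hf : ContinuousOn f (Ioi 0)) (hs : 0 < s) : ContinuousOn (fun ρ => f (s * ρ)) (Ioi 0) :=
  hf.comp (continuous_const_mul s).continuousOn fun _ hρ => mul_pos hs hρ

theorem continuousOn_hProf : ContinuousOn (hProf m) (Ioi 0) := (locAC_hProf m).continuousOn

variable {m} [IsFiniteMeasure (wtMeasure m)]

theorem integrable_h1f_mul_left (hs : 0 < s) : Integrable (fun ρ => h1f m (s * ρ)) (wtMeasure m) :=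
  integrable_wtMeasure (continuousOn_comp_mul_left (continuousOn_h1f m) hs)
    fun _ hρ => abs_h1f_le_one m (mul_pos hs hρ)

theorem integrable_gap_integrand :
    Integrable (fun ρ => (1 / 2) ^ m * h1f m ρ) (wtMeasure m) := by
  simpa using (integrable_h1f_mul_left (m := m) one_pos).const_mul ((1 / 2) ^ m)

theorem integrable_dot3_hProf_mul_hPerp (hs : 0 < s) :
    Integrable (fun ρ => dot3 (hProf m (s * ρ)) (hPerp m ρ)) (wtMeasure m) := by
  refine integrable_wtMeasure (continuousOn_dot3_hPerp m
    (continuousOn_comp_mul_left (continuousOn_hProf m) hs)) (c := 1) fun ρ hρ => ?_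
  exact abs_dot3_hPerp_le m hρ zero_le_one (by rw [nsq3_hProf m (mul_pos hs hρ), one_pow])

theorem gap_pos : 0 < gap m := by
  have hpos : ∀ᵐ ρ ∂wtMeasure m, 0 < (1 / 2) ^ m * h1f m ρ := by
    filter_upwards [ae_wtMeasure_pos m] with ρ hρ
    exact mul_pos (by positivity) (h1f_pos m hρ)
  have hnonneg : 0 ≤ᵐ[wtMeasure m] fun ρ => (1 / 2) ^ m * h1f m ρ := hpos.mono fun _ => le_of_lt
  refine (integral_nonneg_of_ae hnonneg).lt_of_ne' fun hgap => ?_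
  have hzero := (integral_eq_zero_iff_of_nonneg_ae hnonneg integrable_gap_integrand).1 hgap
  have := ae_neBot.2 (wtMeasure_ne_zero m)
  obtain ⟨ρ, hρ, hρ0⟩ := (hpos.and hzero).exists
  exact hρ.ne' hρ0

theorem gap_le_integral_h1f (hs : 1 / 2 ≤ s) (hs2 : s ≤ 2) :
    gap m ≤ ∫ ρ, h1f m (s * ρ) ∂wtMeasure m :=
  integral_wtMeasure_mono integrable_gap_integrand (integrable_h1f_mul_left (by linarith))
    fun _ hρ => half_pow_mul_h1f_le m hs hs2 hρ

theorem sub_one_mul_gap_le_integral_dot3 (hm : m ≠ 0) (hs : 1 ≤ s) (hs2 : s ≤ 2) :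
    (s - 1) * gap m ≤ ∫ ρ, dot3 (hProf m (s * ρ)) (hPerp m ρ) ∂wtMeasure m := by
  rw [gap, ← integral_const_mul]
  exact integral_wtMeasure_mono (integrable_gap_integrand.const_mul _)
    (integrable_dot3_hProf_mul_hPerp (by linarith))
    fun _ hρ => sub_one_mul_le_dot3_hProf_mul_hPerp m hm hs hs2 hρ

theorem integral_dot3_le_sub_one_mul_gap (hm : m ≠ 0) (hs : 0 < s) (hs1 : s ≤ 1) :
    ∫ ρ, dot3 (hProf m (s * ρ)) (hPerp m ρ) ∂wtMeasure m ≤ (s - 1) * gap m := by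
  rw [gap, ← integral_const_mul]
  exact integral_wtMeasure_mono (integrable_dot3_hProf_mul_hPerp hs)
    (integrable_gap_integrand.const_mul _)
    fun _ hρ => dot3_hProf_mul_hPerp_le_sub_one_mul m hm hs hs1 hρ

end Gap

section Centering

variable (m : ℕ) (v : ℝ → V3) (s : ℝ)

/-- The integral against `wtMeasure` of the `i`-th component of `v` dilated by `s`. -/
def moment (i : Fin 3) : ℝ := ∫ ρ, v (s * ρ) i ∂wtMeasure m

/-- The angle of the horizontal moment of `v` dilated by `s`. Rotating it back makes the moment of
the `ĵ`-component vanish. -/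
def momentAngle : ℝ := Complex.arg ⟨moment m v s 0, moment m v s 1⟩

/-- The moment of the `hPerp`-component of `v` after dilation by `s` and rotation by
`-momentAngle`. -/
def tangMoment : ℝ :=
  ∫ ρ, dot3 (rescale s (momentAngle m v s) v ρ) (hPerp m ρ) ∂wtMeasure m

/-- Lipschitz constant of `sin momentAngle` in the distance of `v` to `h`. -/
def angleConst : ℝ := 2 * (wtMeasure m).real univ / gap m

/-- Bound, relative to the distance of `v` to `h`, for `s - 1` at the zero `s` of `tangMoment`. -/
def scaleConst : ℝ := angleConst m * (1 + angleConst m)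

/-- Bound, relative to the distance of `v` to `h`, for the distance to `h` at `1` of the centered
profile. -/
def centerConst : ℝ := 4 * (1 + angleConst m) * (1 + m * angleConst m)

theorem norm_mul_cos_momentAngle :
    ‖(⟨moment m v s 0, moment m v s 1⟩ : ℂ)‖ * Real.cos (momentAngle m v s) = moment m v s 0 :=
  Complex.norm_mul_cos_arg _

theorem norm_mul_sin_momentAngle :
    ‖(⟨moment m v s 0, moment m v s 1⟩ : ℂ)‖ * Real.sin (momentAngle m v s) = moment m v s 1 :=
  Complex.norm_mul_sin_arg _

theorem abs_apply_le_of_nsq3_le {a : V3} {c : ℝ} (hc : 0 ≤ c) (ha : nsq3 a ≤ c ^ 2) (i : Fin 3) :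
    |a i| ≤ c := by
  refine abs_le_of_sq_le_sq (le_trans ?_ ha) hc
  fin_cases i <;> simp only [nsq3, Fin.zero_eta, Fin.mk_one, Fin.reduceFinMk] <;>
    linarith [sq_nonneg (a 0), sq_nonneg (a 1), sq_nonneg (a 2)]

theorem continuousOn_rescale {v : ℝ → V3} (hv : ContinuousOn v (Ioi 0)) {s : ℝ} (hs : 0 < s)
    (α : ℝ) : ContinuousOn (rescale s α v) (Ioi 0) :=
  (continuous_rotZ (-α)).comp_continuousOn (continuousOn_comp_mul_left hv hs)

variable {m v s} {η ρ : ℝ}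

theorem InSigma.abs_apply_le_one {dv : ℝ → V3} (h : InSigma m v dv) (hρ : 0 < ρ) (i : Fin 3) :
    |v ρ i| ≤ 1 :=
  abs_apply_le_of_nsq3_le zero_le_one (by rw [h.nsq3_eq_one hρ, one_pow]) i

variable [IsFiniteMeasure (wtMeasure m)]

theorem angleConst_nonneg : 0 ≤ angleConst m :=
  div_nonneg (by positivity) gap_pos.le

theorem gap_mul_angleConst : gap m * angleConst m = 2 * (wtMeasure m).real univ :=
  mul_div_cancel₀ _ gap_pos.ne'

theorem scaleConst_nonneg : 0 ≤ scaleConst m :=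
  mul_nonneg angleConst_nonneg (by linarith [angleConst_nonneg (m := m)])

namespace InSigma

variable {dv : ℝ → V3}

theorem integrable_apply_mul_left (h : InSigma m v dv) (hs : 0 < s) (i : Fin 3) :
    Integrable (fun ρ => v (s * ρ) i) (wtMeasure m) :=
  integrable_wtMeasure (continuousOn_comp_mul_left (h.locAC.component i).continuousOn hs)
    fun _ hρ => h.abs_apply_le_one (mul_pos hs hρ) i

theorem continuousOn_moment (h : InSigma m v dv) (i : Fin 3) :
    ContinuousOn (moment m v · i) (Ioi 0) := by
  have hi := (h.locAC.component i).continuousOn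
  refine continuousOn_integral_wtMeasure (fun s hs => continuousOn_comp_mul_left hi hs)
    (fun ρ hρ => ?_) fun s hs ρ hρ => h.abs_apply_le_one (mul_pos hs hρ) i
  exact hi.comp (continuous_mul_const ρ).continuousOn fun s hs => mul_pos hs hρ

theorem abs_moment_zero_sub_le (h : InSigma m v dv) (hη : 0 ≤ η)
    (hd : ∀ r, 0 < r → hdist m v r ≤ η ^ 2) (hs : 0 < s) :
    |moment m v s 0 - ∫ ρ, h1f m (s * ρ) ∂wtMeasure m| ≤ η * (wtMeasure m).real univ :=
  abs_integral_wtMeasure_sub_le (h.integrable_apply_mul_left hs 0) (integrable_h1f_mul_left hs)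
    fun _ hρ => abs_apply_le_of_nsq3_le hη (hd _ (mul_pos hs hρ)) 0

theorem abs_moment_one_le (hη : 0 ≤ η) (hd : ∀ r, 0 < r → hdist m v r ≤ η ^ 2) (hs : 0 < s) :
    |moment m v s 1| ≤ η * (wtMeasure m).real univ := by
  refine abs_integral_wtMeasure_le fun ρ hρ => ?_
  simpa [hProf] using abs_apply_le_of_nsq3_le hη (hd _ (mul_pos hs hρ)) 1

theorem half_gap_le_moment_zero (h : InSigma m v dv) (hη : 0 ≤ η)
    (hd : ∀ r, 0 < r → hdist m v r ≤ η ^ 2) (hsmall : angleConst m * η ≤ 1)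
    (hs : s ∈ Icc (1 / 2) 2) : gap m / 2 ≤ moment m v s 0 := by
  have hs0 : 0 < s := by linarith [hs.1]
  have hclose := (abs_le.1 (h.abs_moment_zero_sub_le hη hd hs0)).1
  have hgap := gap_le_integral_h1f (m := m) hs.1 hs.2
  have hmass : 2 * (η * (wtMeasure m).real univ) ≤ gap m := by
    rw [mul_left_comm, ← gap_mul_angleConst]
    nlinarith [gap_pos (m := m)]
  linarith

theorem cos_momentAngle_nonneg (h : InSigma m v dv) (hη : 0 ≤ η)
    (hd : ∀ r, 0 < r → hdist m v r ≤ η ^ 2) (hsmall : angleConst m * η ≤ 1)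
    (hs : s ∈ Icc (1 / 2) 2) : 0 ≤ Real.cos (momentAngle m v s) := by
  have hx := h.half_gap_le_moment_zero hη hd hsmall hs
  rw [← norm_mul_cos_momentAngle] at hx
  exact (pos_of_mul_pos_right ((half_pos gap_pos).trans_le hx) (norm_nonneg _)).le

theorem abs_sin_momentAngle_le (h : InSigma m v dv) (hη : 0 ≤ η)
    (hd : ∀ r, 0 < r → hdist m v r ≤ η ^ 2) (hsmall : angleConst m * η ≤ 1)
    (hs : s ∈ Icc (1 / 2) 2) : |Real.sin (momentAngle m v s)| ≤ angleConst m * η := by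
  have hx := h.half_gap_le_moment_zero hη hd hsmall hs
  have hy := abs_moment_one_le hη hd (show 0 < s by linarith [hs.1])
  rw [← norm_mul_sin_momentAngle, abs_mul, abs_norm] at hy
  have hnorm : gap m / 2 ≤ ‖(⟨moment m v s 0, moment m v s 1⟩ : ℂ)‖ :=
    hx.trans (Complex.re_le_norm ⟨moment m v s 0, moment m v s 1⟩)
  have hsin := mul_le_mul_of_nonneg_right hnorm (abs_nonneg (Real.sin (momentAngle m v s)))
  rw [← mul_le_mul_iff_right₀ (gap_pos (m := m)), ← mul_assoc, gap_mul_angleConst]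
  linarith

theorem continuousOn_momentAngle (h : InSigma m v dv) (hη : 0 ≤ η)
    (hd : ∀ r, 0 < r → hdist m v r ≤ η ^ 2) (hsmall : angleConst m * η ≤ 1) :
    ContinuousOn (momentAngle m v) (Icc (1 / 2) 2) := by
  have hsub : Icc (1 / 2 : ℝ) 2 ⊆ Ioi 0 := fun s hs => lt_of_lt_of_le (by norm_num) hs.1
  have hmom : ContinuousOn (fun s => (⟨moment m v s 0, moment m v s 1⟩ : ℂ)) (Icc (1 / 2) 2) :=
    Complex.equivRealProdCLM.symm.continuous.comp_continuousOn
      (((h.continuousOn_moment 0).prodMk (h.continuousOn_moment 1)).mono hsub)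
  refine fun s hs => (Complex.continuousAt_arg (Or.inl ?_)).comp_continuousWithinAt (hmom s hs)
  exact (half_pos gap_pos).trans_le (h.half_gap_le_moment_zero hη hd hsmall hs)

theorem integral_rescale_momentAngle_apply_one (h : InSigma m v dv) (hs : 0 < s) :
    ∫ ρ, rescale s (momentAngle m v s) v ρ 1 ∂wtMeasure m = 0 := by
  simp only [rescale_apply_one]
  rw [integral_add ((h.integrable_apply_mul_left hs 0).const_mul _)
    ((h.integrable_apply_mul_left hs 1).const_mul _), integral_const_mul, integral_const_mul,
    ← moment, ← moment]
  linear_combination Real.sin (momentAngle m v s) * norm_mul_cos_momentAngle m v s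
    - Real.cos (momentAngle m v s) * norm_mul_sin_momentAngle m v s

theorem nsq3_rescale_momentAngle_sub_hProf_le (h : InSigma m v dv) (hη : 0 ≤ η)
    (hd : ∀ r, 0 < r → hdist m v r ≤ η ^ 2) (hsmall : angleConst m * η ≤ 1)
    (hs : s ∈ Icc (1 / 2) 2) (hρ : 0 < ρ) :
    nsq3 (rescale s (momentAngle m v s) v ρ - hProf m (s * ρ)) ≤
      (2 * (1 + angleConst m) * η) ^ 2 := by
  have hsρ : 0 < s * ρ := mul_pos (by linarith [hs.1]) hρ
  set α := momentAngle m v s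
  have hsplit : rescale s α v ρ - hProf m (s * ρ) =
      rotZ (-α) (v (s * ρ) - hProf m (s * ρ)) +
        (rotZ (-α) (hProf m (s * ρ)) - hProf m (s * ρ)) := by
    rw [rotZ_sub, rescale, sub_add_sub_cancel]
  have hmove : nsq3 (rotZ (-α) (v (s * ρ) - hProf m (s * ρ))) ≤ η ^ 2 :=
    (nsq3_rotZ _ _).trans_le (hd _ hsρ)
  have hturn := nsq3_rotZ_neg_sub_le (h.cos_momentAngle_nonneg hη hd hsmall hs)
    (hProf m (s * ρ))
  rw [nsq3_hProf m hsρ, mul_one] at hturn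
  have hsin : Real.sin α ^ 2 ≤ (angleConst m * η) ^ 2 :=
    sq_le_sq' (abs_le.1 (h.abs_sin_momentAngle_le hη hd hsmall hs)).1
      (abs_le.1 (h.abs_sin_momentAngle_le hη hd hsmall hs)).2
  rw [hsplit]
  refine (nsq3_add_le _ _).trans ?_
  nlinarith [mul_nonneg (angleConst_nonneg (m := m)) (sq_nonneg η), sq_nonneg η]

theorem abs_tangMoment_sub_le (h : InSigma m v dv) (hη : 0 ≤ η)
    (hd : ∀ r, 0 < r → hdist m v r ≤ η ^ 2) (hsmall : angleConst m * η ≤ 1)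
    (hs : s ∈ Icc (1 / 2) 2) :
    |tangMoment m v s - ∫ ρ, dot3 (hProf m (s * ρ)) (hPerp m ρ) ∂wtMeasure m| ≤
      gap m * (scaleConst m * η) := by
  have hs0 : 0 < s := by linarith [hs.1]
  have hA := angleConst_nonneg (m := m)
  have hint := integrable_wtMeasure (m := m) (c := 1)
    (continuousOn_dot3_hPerp m (continuousOn_rescale h.locAC.continuousOn hs0 (momentAngle m v s)))
    fun ρ hρ => abs_dot3_hPerp_le m hρ zero_le_one
      (by rw [nsq3_rescale, h.nsq3_eq_one (mul_pos hs0 hρ), one_pow])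
  refine (abs_integral_wtMeasure_sub_le hint (integrable_dot3_hProf_mul_hPerp hs0)
    (c := 2 * (1 + angleConst m) * η) fun ρ hρ => ?_).trans_eq ?_
  · rw [← dot3_sub_left]
    exact abs_dot3_hPerp_le m hρ (by positivity)
      (h.nsq3_rescale_momentAngle_sub_hProf_le hη hd hsmall hs hρ)
  · rw [scaleConst]
    linear_combination -(1 + angleConst m) * η * gap_mul_angleConst (m := m)

theorem continuousOn_tangMoment (h : InSigma m v dv) (hη : 0 ≤ η)
    (hd : ∀ r, 0 < r → hdist m v r ≤ η ^ 2) (hsmall : angleConst m * η ≤ 1) :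
    ContinuousOn (tangMoment m v) (Icc (1 / 2) 2) := by
  have hpos (s : ℝ) (hs : s ∈ Icc (1 / 2 : ℝ) 2) : 0 < s := by linarith [hs.1]
  refine continuousOn_integral_wtMeasure (c := 1) (fun s hs => continuousOn_dot3_hPerp m
    (continuousOn_rescale h.locAC.continuousOn (hpos s hs) _)) (fun ρ hρ => ?_)
    fun s hs ρ hρ => abs_dot3_hPerp_le m hρ zero_le_one
      (by rw [nsq3_rescale, h.nsq3_eq_one (mul_pos (hpos s hs) hρ), one_pow])
  have hangle := h.continuousOn_momentAngle hη hd hsmall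
  have hcomp (i : Fin 3) : ContinuousOn (fun s => v (s * ρ) i) (Icc (1 / 2) 2) :=
    (h.locAC.component i).continuousOn.comp (continuous_mul_const ρ).continuousOn
      fun s hs => mul_pos (hpos s hs) hρ
  simp only [dot3, rescale_apply_zero, rescale_apply_one, rescale_apply_two]
  have hcos := Real.continuous_cos.comp_continuousOn hangle
  have hsin := Real.continuous_sin.comp_continuousOn hangle
  exact (((((hcos.mul (hcomp 0)).add (hsin.mul (hcomp 1))).mul continuousOn_const).add
    (((hsin.neg.mul (hcomp 0)).add (hcos.mul (hcomp 1))).mul continuousOn_const)).add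
    ((hcomp 2).mul continuousOn_const))

theorem exists_tangMoment_eq_zero (h : InSigma m v dv) (hm : m ≠ 0) (hη : 0 ≤ η)
    (hd : ∀ r, 0 < r → hdist m v r ≤ η ^ 2) (hangle : angleConst m * η ≤ 1)
    (hscale : scaleConst m * η ≤ 1 / 2) :
    ∃ s ∈ Icc (1 - scaleConst m * η) (1 + scaleConst m * η), tangMoment m v s = 0 := by
  set t := scaleConst m * η
  have ht0 : 0 ≤ t := mul_nonneg scaleConst_nonneg hη
  have hsub : Icc (1 - t) (1 + t) ⊆ Icc (1 / 2) 2 := Icc_subset_Icc (by linarith) (by linarith)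
  have hleft : tangMoment m v (1 - t) ≤ 0 := by
    have hclose := abs_le.1 (h.abs_tangMoment_sub_le hη hd hangle (s := 1 - t)
      ⟨by linarith, by linarith⟩)
    have hgap := integral_dot3_le_sub_one_mul_gap hm (s := 1 - t) (by linarith) (by linarith)
    linarith
  have hright : 0 ≤ tangMoment m v (1 + t) := by
    have hclose := abs_le.1 (h.abs_tangMoment_sub_le hη hd hangle (s := 1 + t)
      ⟨by linarith, by linarith⟩)
    have hgap := sub_one_mul_gap_le_integral_dot3 hm (s := 1 + t) (by linarith) (by linarith)
    linarith
  exact intermediate_value_Icc (by linarith)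
    ((h.continuousOn_tangMoment hη hd hangle).mono hsub) ⟨hleft, hright⟩

theorem integral_tang (h : InSigma m v dv) :
    ∫ ρ, tang m v ρ ∂wtMeasure m =
      (∫ ρ, v ρ 1 ∂wtMeasure m : ℝ) +
        (∫ ρ, dot3 (v ρ) (hPerp m ρ) ∂wtMeasure m : ℝ) * Complex.I := by
  have hfst := h.integrable_apply_mul_left one_pos 1
  have hsnd := integrable_wtMeasure (m := m) (c := 1)
    (continuousOn_dot3_hPerp m h.locAC.continuousOn)
    fun ρ hρ => abs_dot3_hPerp_le m hρ zero_le_one (by rw [h.nsq3_eq_one hρ, one_pow])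
  simp only [one_mul] at hfst
  simp only [tang, frameCoord]
  rw [integral_add hfst.ofReal (hsnd.ofReal.mul_const _), integral_mul_const,
    integral_complex_ofReal, integral_complex_ofReal]

theorem hdist_rescale_momentAngle_one_le (h : InSigma m v dv) (hη : 0 ≤ η)
    (hd : ∀ r, 0 < r → hdist m v r ≤ η ^ 2) (hangle : angleConst m * η ≤ 1)
    (hscale : scaleConst m * η ≤ 1 / 2)
    (hs : s ∈ Icc (1 - scaleConst m * η) (1 + scaleConst m * η)) :
    hdist m (rescale s (momentAngle m v s) v) 1 ≤ (centerConst m * η) ^ 2 := by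
  have hA := angleConst_nonneg (m := m)
  have hmA : 0 ≤ m * angleConst m := mul_nonneg m.cast_nonneg hA
  have hmem : s ∈ Icc (1 / 2) 2 := ⟨by linarith [hs.1], by linarith [hs.2]⟩
  have hnear := h.nsq3_rescale_momentAngle_sub_hProf_le hη hd hangle hmem one_pos
  rw [mul_one] at hnear
  have hdil := nsq3_hProf_sub_hProf_one_le m hmem.1
  have hs1 : (s - 1) ^ 2 ≤ (scaleConst m * η) ^ 2 :=
    sq_le_sq' (by linarith [hs.1]) (by linarith [hs.2])
  rw [hdist, ← sub_add_sub_cancel _ (hProf m s)]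
  refine (nsq3_add_le _ _).trans ?_
  calc _ ≤ 2 * ((2 * (1 + angleConst m) * η) ^ 2 + 8 * m ^ 2 * (scaleConst m * η) ^ 2) :=
        mul_le_mul_of_nonneg_left (add_le_add hnear (hdil.trans
          (mul_le_mul_of_nonneg_left hs1 (by positivity)))) zero_le_two
    _ = 8 * ((1 + angleConst m) * η) ^ 2 * (1 + 2 * (m * angleConst m) ^ 2) := by
        rw [scaleConst]; ring
    _ ≤ 8 * ((1 + angleConst m) * η) ^ 2 * (2 * (1 + m * angleConst m) ^ 2) :=
        mul_le_mul_of_nonneg_left (by nlinarith) (by positivity)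
    _ = (centerConst m * η) ^ 2 := by rw [centerConst]; ring

theorem exists_rescale_orthogonal (h : InSigma m v dv) (hm : m ≠ 0) (hη : 0 ≤ η)
    (hd : ∀ r, 0 < r → hdist m v r ≤ η ^ 2) (hangle : angleConst m * η ≤ 1)
    (hscale : scaleConst m * η ≤ 1 / 2) :
    ∃ s α, 0 < s ∧ ∫ ρ, tang m (rescale s α v) ρ ∂wtMeasure m = 0 ∧
      hdist m (rescale s α v) 1 ≤ (centerConst m * η) ^ 2 := by
  obtain ⟨s, hs, hzero⟩ := h.exists_tangMoment_eq_zero hm hη hd hangle hscale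
  have hs0 : 0 < s := by linarith [hs.1]
  refine ⟨s, momentAngle m v s, hs0, ?_,
    h.hdist_rescale_momentAngle_one_le hη hd hangle hscale hs⟩
  rw [(inSigma_rescale _ hs0 h).integral_tang, h.integral_rescale_momentAngle_apply_one hs0,
    ← tangMoment, hzero]
  simp

end InSigma

end Centering

section Splitting

variable {m : ℕ} {v dv : ℝ → V3}

namespace InSigma

theorem exists_third_eq_zero (h : InSigma m v dv) : ∃ r, 0 < r ∧ v r 2 = 0 := by
  obtain ⟨a, hneg, ha⟩ := ((h.tendsto_third_zero.eventually_lt_const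
    (show (-1 : ℝ) < 0 by norm_num)).and self_mem_nhdsWithin).exists
  obtain ⟨b, hpos, hb⟩ := ((h.tendsto_third_atTop.eventually_const_lt
    (zero_lt_one (α := ℝ))).and (eventually_gt_atTop 0)).exists
  exact isPreconnected_Ioi.intermediate_value ha hb h.isLocAC_third.continuousOn
    ⟨hneg.le, hpos.le⟩

theorem exists_hdist_rescale_one_eq_zero (h : InSigma m v dv) :
    ∃ s α, 0 < s ∧ rescale s α v 1 2 = 0 ∧ hdist m (rescale s α v) 1 = 0 := by
  obtain ⟨s, hs, hthird⟩ := h.exists_third_eq_zero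
  set w : ℂ := ⟨v s 0, v s 1⟩
  have hunit : v s 0 ^ 2 + v s 1 ^ 2 = 1 := by
    simpa [nsq3, hthird] using h.nsq3_eq_one hs
  have hnorm : ‖w‖ = 1 := by
    rw [Complex.norm_eq_sqrt_sq_add_sq, hunit, Real.sqrt_one]
  have hcos : Real.cos w.arg = v s 0 := by simpa [hnorm] using Complex.norm_mul_cos_arg w
  have hsin : Real.sin w.arg = v s 1 := by simpa [hnorm] using Complex.norm_mul_sin_arg w
  have hfst : v s 0 * v s 0 + v s 1 * v s 1 = 1 := by linarith
  refine ⟨s, w.arg, hs, by rw [rescale_apply_two, mul_one, hthird], ?_⟩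
  have hone : rescale s w.arg v 1 = hProf m 1 := by
    ext i
    fin_cases i
    · simp [rescale_apply_zero, hcos, hsin, hfst, hProf, h1f, one_add_one_eq_two]
    · simp [rescale_apply_one, hcos, hsin, hProf, mul_comm (v s 0)]
    · exact (rescale_apply_two s w.arg v 1).trans (by simp [hthird, hProf, h3f])
  simp [hdist, hone, nsq3]

end InSigma

variable (m) in
/-- The constant bounding the squared `X`-norm of the tangential coordinate by the excess. -/
def splitConst : ℝ := (4 * m ^ 2 + 1) * (64 * centerConst m ^ 2 + 32) + 2

theorem splitConst_pos : 0 < splitConst m := by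
  rw [splitConst]
  positivity

variable [IsFiniteMeasure (wtMeasure m)]

theorem four_le_centerConst : 4 ≤ centerConst m := by
  have hA := angleConst_nonneg (m := m)
  have hmA : 0 ≤ m * angleConst m := mul_nonneg m.cast_nonneg hA
  rw [centerConst]
  nlinarith [mul_nonneg hA hmA]

theorem four_mul_angleConst_le_centerConst : 4 * angleConst m ≤ centerConst m := by
  have hA := angleConst_nonneg (m := m)
  have hmA : 0 ≤ m * angleConst m := mul_nonneg m.cast_nonneg hA
  rw [centerConst]
  nlinarith [mul_nonneg hA hmA]

theorem four_mul_scaleConst_le_mul_centerConst (hm : m ≠ 0) :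
    4 * scaleConst m ≤ m * centerConst m := by
  have hA := angleConst_nonneg (m := m)
  have hm1 : (1 : ℝ) ≤ m := mod_cast Nat.one_le_iff_ne_zero.2 hm
  rw [centerConst, scaleConst]
  nlinarith [mul_nonneg hA (sub_nonneg.2 hm1), mul_nonneg (mul_nonneg hA hA) (sub_nonneg.2 hm1)]

theorem centerConst_mul_le (hm : m ≠ 0) {η : ℝ} (hη : 0 ≤ η)
    (hsmall : 8 * (m * centerConst m * η) ≤ 1) : centerConst m * η ≤ 1 / 8 := by
  have hm1 : (1 : ℝ) ≤ m := mod_cast Nat.one_le_iff_ne_zero.2 hm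
  have hcη : 0 ≤ centerConst m * η := mul_nonneg (by linarith [four_le_centerConst (m := m)]) hη
  rw [mul_assoc] at hsmall
  linarith [le_mul_of_one_le_left hcη hm1]

theorem le_of_mul_centerConst_mul_le (hm : m ≠ 0) {η : ℝ} (hη : 0 ≤ η)
    (hsmall : 8 * (m * centerConst m * η) ≤ 1) : η ≤ 1 / 8 := by
  have := centerConst_mul_le hm hη hsmall
  linarith [mul_le_mul_of_nonneg_right (four_le_centerConst (m := m)) hη]

theorem InSigma.exists_rescale_orthogonal_hdist_le (h : InSigma m v dv) (hm : m ≠ 0) {η : ℝ}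
    (hη : 0 ≤ η) (hex : 8 * excess m v dv = η ^ 2) (hsmall : 8 * (m * centerConst m * η) ≤ 1) :
    ∃ s α, 0 < s ∧ ∫ ρ, tang m (rescale s α v) ρ ∂wtMeasure m = 0 ∧
      hdist m (rescale s α v) 1 ≤ (centerConst m * η) ^ 2 := by
  obtain ⟨s₁, α₁, hs₁, hthird, hone⟩ := h.exists_hdist_rescale_one_eq_zero
  have h₁ := inSigma_rescale α₁ hs₁ h
  have hη1 := le_of_mul_centerConst_mul_le hm hη hsmall
  have hcη := centerConst_mul_le hm hη hsmall
  have hnear (r : ℝ) (hr : 0 < r) : hdist m (rescale s₁ α₁ v) r ≤ η ^ 2 := by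
    have := h₁.hdist_le (Nat.one_le_iff_ne_zero.2 hm) (by simp [hthird])
      (by rw [excess_rescale α₁ v dv hs₁ m]; nlinarith) hr
    rwa [hone, excess_rescale α₁ v dv hs₁ m, hex, mul_zero, zero_add] at this
  obtain ⟨s₂, α₂, hs₂, horth, hdist₂⟩ := h₁.exists_rescale_orthogonal hm hη hnear
    (by linarith [mul_le_mul_of_nonneg_right (four_mul_angleConst_le_centerConst (m := m)) hη])
    (by linarith [mul_le_mul_of_nonneg_right (four_mul_scaleConst_le_mul_centerConst hm) hη])
  rw [rescale_rescale] at horth hdist₂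
  exact ⟨s₁ * s₂, α₁ + α₂, mul_pos hs₁ hs₂, horth, hdist₂⟩

theorem InSigma.hdist_le_two_and_integral_xDen_le (h : InSigma m v dv) (hm : m ≠ 0) {η : ℝ}
    (hη : 0 ≤ η) (hex : 8 * excess m v dv = η ^ 2) (hsmall : 8 * (m * centerConst m * η) ≤ 1)
    (hone : hdist m v 1 ≤ (centerConst m * η) ^ 2) :
    (∀ r, 0 < r → hdist m v r ≤ 2) ∧ IntegrableOn (xDen (tang m v) (dtang m v dv)) (Ioi 0) ∧
      ∫ ρ in Ioi 0, xDen (tang m v) (dtang m v dv) ρ ≤ splitConst m * excess m v dv := by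
  have hη1 := le_of_mul_centerConst_mul_le hm hη hsmall
  have hcη := centerConst_mul_le hm hη hsmall
  have hcη0 : 0 ≤ centerConst m * η := mul_nonneg (by linarith [four_le_centerConst (m := m)]) hη
  have hthird : m * |v 1 2| ≤ 1 / 8 := by
    have hv : |v 1 2| ≤ centerConst m * η := by
      simpa [hProf, h3f] using abs_apply_le_of_nsq3_le hcη0 hone 2
    linarith [mul_le_mul_of_nonneg_left hv m.cast_nonneg]
  have hε : excess m v dv ≤ 1 / 2 := by nlinarith
  have hm1 := Nat.one_le_iff_ne_zero.2 hm
  obtain ⟨hint, hle⟩ := h.integral_xDen_le hm1 hthird hε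
  refine ⟨fun r hr => ?_, hint, hle.trans ?_⟩
  · nlinarith [h.hdist_le hm1 hthird hε hr]
  · rw [mul_pow, ← hex] at hone
    have := mul_le_mul_of_nonneg_left hone (show 0 ≤ 4 * (m : ℝ) ^ 2 + 1 by positivity)
    rw [splitConst]
    linarith

theorem InSigma.exists_rescale_orthogonal_integral_xDen_le (h : InSigma m v dv) (hm : m ≠ 0)
    (hsmall : 8 * (m * centerConst m * √(8 * excess m v dv)) ≤ 1) :
    ∃ s α, 0 < s ∧ ∫ ρ, tang m (rescale s α v) ρ ∂wtMeasure m = 0 ∧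
      (∀ r, 0 < r → hdist m (rescale s α v) r ≤ 2) ∧
      IntegrableOn (xDen (tang m (rescale s α v)) (dtang m (rescale s α v) (drescale s α dv)))
        (Ioi 0) ∧
      ∫ ρ in Ioi 0, xDen (tang m (rescale s α v)) (dtang m (rescale s α v) (drescale s α dv)) ρ ≤
        splitConst m * excess m v dv := by
  have hη := Real.sqrt_nonneg (8 * excess m v dv)
  have hex := (Real.sq_sqrt (by linarith [h.excess_nonneg] : 0 ≤ 8 * excess m v dv)).symm
  obtain ⟨s, α, hs, horth, hone⟩ := h.exists_rescale_orthogonal_hdist_le hm hη hex hsmall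
  have hex_rescale := excess_rescale α v dv hs m
  have hbound := (inSigma_rescale α hs h).hdist_le_two_and_integral_xDen_le hm hη
    (hex_rescale.symm ▸ hex) hsmall hone
  rw [hex_rescale] at hbound
  exact ⟨s, α, hs, horth, hbound⟩

theorem mul_sqrt_excess_le_one_of_energy_le (hm : m ≠ 0)
    (hE : energy m v dv ≤ 4 * π * m + (1 / (16 * (m * centerConst m))) ^ 2) :
    8 * (m * centerConst m * √(8 * excess m v dv)) ≤ 1 := by
  have hpos : 0 < m * centerConst m :=
    mul_pos (by positivity) (by linarith [four_le_centerConst (m := m)])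
  set δ := 1 / (16 * (m * centerConst m))
  have hexcess : excess m v dv ≤ δ ^ 2 / 2 := by
    rw [excess, sub_le_iff_le_add, div_le_iff₀ Real.pi_pos]
    nlinarith [Real.two_le_pi, sq_nonneg δ]
  have hsqrt : √(8 * excess m v dv) ≤ 2 * δ :=
    Real.sqrt_le_iff.2 ⟨by positivity, by linarith⟩
  calc _ ≤ 8 * (m * centerConst m * (2 * δ)) := by gcongr
    _ = 16 * (m * centerConst m) * δ := by ring
    _ = 1 := mul_one_div_cancel (by positivity)

end Splitting

theorem integral_mul_h1f_eq (m : ℕ) (z : ℝ → ℂ) :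
    ∫ ρ in Ioi (0 : ℝ), z ρ * ((h1f m ρ * ρ : ℝ) : ℂ) = ∫ ρ, z ρ ∂wtMeasure m := by
  simp only [integral_wtMeasure, wt, Complex.real_smul, mul_comm (z _)]

/-- **Splitting lemma.** For m ≥ 3 and δ sufficiently small, every u ∈ Σ_m with
E(u) ≤ 4πm + δ² can be written as
u = e^{(mθ+α)R}[ (1 + γ(r/s)) h(r/s) + V^{r/s}(z(r/s)) ], γ = (1−|z|²)^{1/2} − 1,
with z satisfying the orthogonality condition ∫ z h₁ ρ dρ = 0 and
‖z‖_X² ≤ C (E(u) − 4πm). -/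
theorem statement16 (m : ℕ) (hm : 3 ≤ m) :
    ∃ δ > (0:ℝ), ∃ C > (0:ℝ), ∀ v dv : ℝ → V3,
      InSigma m v dv →
      energy m v dv ≤ 4 * π * m + δ ^ 2 →
      ∃ s α : ℝ, ∃ z dz : ℝ → ℂ,
        0 < s ∧
        LocACC z dz ∧
        -- the splitting of the map
        (∀ r ∈ Ioi (0:ℝ),
          v r = rotZ α (fun i =>
            (1 + gamC z (r / s)) * hProf m (r / s) i + Vrho m (z (r / s)) (r / s) i)) ∧
        -- orthogonality condition
        (∫ ρ in Ioi (0:ℝ), z ρ * ((h1f m ρ * ρ : ℝ) : ℂ)) = 0 ∧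
        -- smallness of the X-norm
        IntegrableOn (xDen z dz) (Ioi (0:ℝ)) ∧
        (∫ ρ in Ioi (0:ℝ), xDen z dz ρ) ≤ C * (energy m v dv - 4 * π * m) := by
  have := isFiniteMeasure_wtMeasure hm
  have hm0 : m ≠ 0 := by lia
  have hcenter := four_le_centerConst (m := m)
  refine ⟨1 / (16 * (m * centerConst m)), by positivity, splitConst m / π,
    div_pos splitConst_pos Real.pi_pos, fun v dv h hE => ?_⟩
  obtain ⟨s, α, hs, horth, hnear, hint, hbound⟩ :=
    h.exists_rescale_orthogonal_integral_xDen_le hm0 (mul_sqrt_excess_le_one_of_energy_le hm0 hE)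
  have hu := inSigma_rescale α hs h
  refine ⟨s, α, tang m (rescale s α v), dtang m (rescale s α v) (drescale s α dv), hs,
    hu.locACC_tang, fun r hr => ?_, (integral_mul_h1f_eq m _).trans horth, hint, ?_⟩
  · have hrs : 0 < r / s := div_pos hr hs
    rw [eq_rotZ_rescale α v r hs]
    exact congrArg (rotZ α)
      (eq_one_add_gamC_smul_hProf_add_Vrho hrs (hu.nsq3_eq_one hrs) (hnear _ hrs))
  · have hex : excess m v dv = (energy m v dv - 4 * π * m) / π := by rw [excess]; field_simp
    rwa [hex, mul_div_assoc', ← div_mul_eq_mul_div] at hbound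

end
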